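/- arXiv:1002.3338 — 2 statements merged into one kernel-verified Lean document; each statement's English description precedes it below -/
import Mathlib

section
/- If D ⊆ ℝℙⁿ is a compact convex set, then its elliptic tube D^e ⊆ ℂℙⁿ is ℂ-convex. -/
open scoped ComplexConjugate

noncomputable section

abbrev RV (n : ℕ) : Type := Fin (n + 1) → ℝ
abbrev CV (n : ℕ) : Type := Fin (n + 1) → ℂ
abbrev RP (n : ℕ) : Type := Projectivization ℝ (RV n)
abbrev CP (n : ℕ) : Type := Projectivization ℂ (CV n)

/-- The quotient topology on a projectivization. -/
instance projTopology {K V : Type*} [DivisionRing K] [AddCommGroup V] [Module K V]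
    [TopologicalSpace V] : TopologicalSpace (Projectivization K V) :=
  inferInstanceAs (TopologicalSpace (Quotient (projectivizationSetoid K V)))

/-- Complexification of a real vector. -/
def cplx {n : ℕ} (v : RV n) : CV n := fun i => (v i : ℂ)

/-- The closed (possibly degenerate) projective segment spanned by two lifts. -/
def realSeg {n : ℕ} (v₀ v₁ : RV n) : Set (RP n) :=
  {x | ∃ c₀ c₁ : ℝ, 0 ≤ c₀ * c₁ ∧ ∃ h : c₀ • v₀ + c₁ • v₁ ≠ 0,
    x = Projectivization.mk ℝ (c₀ • v₀ + c₁ • v₁) h}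

/-- The elliptic tube over the closed segment determined by the lifts `v₀ v₁`. -/
def segTube {n : ℕ} (v₀ v₁ : RV n) : Set (CP n) :=
  {z | ∃ c₀ c₁ : ℂ, 0 ≤ (c₀ * conj c₁).re ∧ ∃ h : c₀ • cplx v₀ + c₁ • cplx v₁ ≠ 0,
    z = Projectivization.mk ℂ (c₀ • cplx v₀ + c₁ • cplx v₁) h}

/-- The elliptic tube over a subset `D` of real projective space: the union of the tubes
over all closed segments contained in `D`. -/
def eTube {n : ℕ} (D : Set (RP n)) : Set (CP n) :=
  ⋃ (v₀ : RV n) (v₁ : RV n) (_ : v₀ ≠ 0) (_ : v₁ ≠ 0) (_ : realSeg v₀ v₁ ⊆ D),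
    segTube v₀ v₁

/-- Real projective lines. -/
def isLineR {n : ℕ} (L : Set (RP n)) : Prop :=
  ∃ W : Submodule ℝ (RV n), Module.finrank ℝ W = 2 ∧ L = {x | x.rep ∈ W}

/-- Convexity in real projective space: the set contains no projective line and its
intersection with every projective line is connected. -/
def convexR {n : ℕ} (D : Set (RP n)) : Prop :=
  (∀ L, isLineR L → ¬ L ⊆ D) ∧ ∀ L, isLineR L → IsPreconnected (D ∩ L)

/-- Complex projective lines in `ℂℙⁿ`. -/
def isLineC {n : ℕ} (L : Set (CP n)) : Prop :=
  ∃ W : Submodule ℂ (CV n), Module.finrank ℂ W = 2 ∧ L = {z | z.rep ∈ W}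

/-- ℂ-convexity: the set contains no complex projective line, and its intersection with
every complex projective line is connected and simply connected. -/
def cConvex {n : ℕ} (E : Set (CP n)) : Prop :=
  (∀ L, isLineC L → ¬ L ⊆ E) ∧
    ∀ L, isLineC L → IsPreconnected (E ∩ L) ∧
      ((E ∩ L).Nonempty → SimplyConnectedSpace ↥(E ∩ L))

open Set Filter Topology

/-! The cone `C ⊆ ℝⁿ⁺¹` over a compact convex set `D` is closed, and for linearly independent
`u, v ∈ C` it contains exactly one of the segments from `u` to `v` and from `u` to `-v`. A maximal
convex subset of `C \ {0}` is therefore one half of it, so that `C = K ∪ -K` for a salient closed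
convex cone `K`. Two complex numbers enclosing an angle of at most `π / 2` can be rotated into the
first quadrant, so the elliptic tube of `D` is the projectivization of the salient cone `K + iK`.
A real functional which is positive on `K \ {0}` extends to a complex functional `ℓ` whose only zero
on `K + iK` is the origin. Hence the tube misses a hyperplane and contains no line, and in the
complementary affine chart its trace on a linear subspace is the image of a compact convex base of
a salient cone under the perspective map `b ↦ (ℓ b)⁻¹ • b`. This image is a retract of the ambient
space, and is thus contractible. -/

theorem linearIndependent_pair_or_exists_smul {K V : Type*} [DivisionRing K] [AddCommGroup V]
    [Module K V] {u : V} (hu : u ≠ 0) (v : V) :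
    LinearIndependent K ![u, v] ∨ ∃ r : K, v = r • u := by
  rw [LinearIndependent.pair_iff' hu]
  exact (em (∃ r : K, v = r • u)).symm.imp_left fun h r hr => h ⟨r, hr.symm⟩

section ProjConvexCone

variable {V : Type*} [AddCommGroup V] [Module ℝ V] {C : Set V} {u v : V}

theorem ne_zero_of_mem_segment_of_linearIndependent {w : V} (huv : LinearIndependent ℝ ![u, v])
    (hw : w ∈ segment ℝ u v) : w ≠ 0 := by
  obtain ⟨a, b, -, -, hab, rfl⟩ := hw
  intro h
  obtain ⟨rfl, rfl⟩ := LinearIndependent.pair_iff.1 huv a b h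
  norm_num at hab

theorem isClosed_setOf_segment_subset [TopologicalSpace V] [ContinuousAdd V]
    [ContinuousConstSMul ℝ V] (hC : IsClosed C) (v : V) : IsClosed {u | segment ℝ u v ⊆ C} := by
  have : {u | segment ℝ u v ⊆ C} =
      ⋂ t ∈ Icc (0 : ℝ) 1, (fun u => (1 - t) • u + t • v) ⁻¹' C := by
    ext u
    simp only [segment_eq_image, image_subset_iff, mem_iInter, mem_ofPred_eq, mem_preimage]
    rfl
  rw [this]
  exact isClosed_biInter fun t _ => hC.preimage (by fun_prop)

/-- The cone over a convex set of the real projectivization of `V`. Of the two projective segments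
joining two points of the set, the second one is the image of the segment from `u` to `-v`. -/
structure IsProjConvexCone (C : Set V) : Prop where
  zero_mem : (0 : V) ∈ C
  smul_mem : ∀ (c : ℝ) {v : V}, v ∈ C → c • v ∈ C
  exists_notMem : ∀ {u v : V}, LinearIndependent ℝ ![u, v] → ∃ a b : ℝ, a • u + b • v ∉ C
  segment_subset_or : ∀ {u v : V}, u ∈ C → v ∈ C → segment ℝ u v ⊆ C ∨ segment ℝ u (-v) ⊆ C

namespace IsProjConvexCone

theorem neg_mem (hC : IsProjConvexCone C) (hv : v ∈ C) : -v ∈ C := by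
  simpa using hC.smul_mem (-1) hv

theorem combination_mem (hC : IsProjConvexCone C) (h : segment ℝ u v ⊆ C) {a b : ℝ}
    (hab : 0 ≤ a * b) : a • u + b • v ∈ C := by
  have of_nonneg : ∀ {a b : ℝ}, 0 ≤ a → 0 ≤ b → a • u + b • v ∈ C := by
    intro a b ha hb
    rcases (add_nonneg ha hb).eq_or_lt' with h0 | hpos
    · obtain ⟨rfl, rfl⟩ := (add_eq_zero_iff_of_nonneg ha hb).1 h0
      simpa using hC.zero_mem
    · have := hC.smul_mem (a + b) (h ⟨a / (a + b), b / (a + b), by positivity, by positivity,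
        by field_simp, rfl⟩)
      rwa [smul_add, smul_smul, smul_smul, mul_div_cancel₀ _ hpos.ne',
        mul_div_cancel₀ _ hpos.ne'] at this
  rcases mul_nonneg_iff.1 hab with ⟨ha, hb⟩ | ⟨ha, hb⟩
  · exact of_nonneg ha hb
  · have := hC.neg_mem (of_nonneg (neg_nonneg.2 ha) (neg_nonneg.2 hb))
    rwa [show -(-a • u + -b • v) = a • u + b • v by module] at this

theorem not_segment_subset_neg (hC : IsProjConvexCone C) (huv : LinearIndependent ℝ ![u, v])
    (h : segment ℝ u v ⊆ C) : ¬ segment ℝ u (-v) ⊆ C := by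
  intro h'
  obtain ⟨a, b, hab⟩ := hC.exists_notMem huv
  rcases le_total 0 (a * b) with h0 | h0
  · exact hab (hC.combination_mem h h0)
  · have := hC.combination_mem h' (a := a) (b := -b) (by linarith)
    rw [smul_neg, neg_smul, neg_neg] at this
    exact hab this

/-- Maximal convex subsets of the punctured cone; they turn out to be the halves `K \ {0}` of a
decomposition `C = K ∪ -K`. -/
def IsHalf (C K : Set V) : Prop :=
  Maximal (fun K => Convex ℝ K ∧ K ⊆ C \ {0}) K

theorem exists_isHalf (C : Set V) : ∃ K, IsHalf C K := by
  refine zorn_subset {K | Convex ℝ K ∧ K ⊆ C \ {0}} fun c hc hchain => ?_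
  exact ⟨⋃₀ c, ⟨hchain.directedOn.convex_sUnion fun K hK => (hc hK).1,
    sUnion_subset fun K hK => (hc hK).2⟩, fun K hK => subset_sUnion_of_mem hK⟩

variable {K : Set V}

theorem IsHalf.mem_of_convexHull_insert (hK : IsHalf C K)
    (h : convexHull ℝ (insert v K) ⊆ C \ {0}) : v ∈ K :=
  hK.le_of_ge ⟨convex_convexHull ℝ _, h⟩ ((subset_insert v K).trans (subset_convexHull ℝ _))
    (subset_convexHull ℝ _ (mem_insert v K))

theorem IsHalf.coe_hull (hK : IsHalf C K) (hC : IsProjConvexCone C) :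
    (ConvexCone.hull ℝ K : Set V) = K := by
  refine (hK.le_of_ge ⟨(ConvexCone.hull ℝ K).convex, ?_⟩ ConvexCone.subset_hull).antisymm
    ConvexCone.subset_hull
  intro w hw
  obtain ⟨t, ht, y, hy, rfl⟩ := (ConvexCone.mem_hull_of_convex hK.prop.1).1 hw
  exact ⟨hC.smul_mem t (hK.prop.2 hy).1, smul_ne_zero ht.ne' (hK.prop.2 hy).2⟩

theorem IsHalf.smul_mem (hK : IsHalf C K) (hC : IsProjConvexCone C) {c : ℝ} (hc : 0 < c)
    (hv : v ∈ K) : c • v ∈ K := by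
  rw [← hK.coe_hull hC] at hv ⊢
  exact (ConvexCone.hull ℝ K).smul_mem hc hv

theorem IsHalf.add_mem (hK : IsHalf C K) (hC : IsProjConvexCone C) (hu : u ∈ K) (hv : v ∈ K) :
    u + v ∈ K := by
  rw [← hK.coe_hull hC] at hu hv ⊢
  exact (ConvexCone.hull ℝ K).add_mem hu hv

theorem IsHalf.neg_notMem (hK : IsHalf C K) (hv : v ∈ K) : -v ∉ K := by
  intro hv'
  have h0 : (2⁻¹ : ℝ) • v + (2⁻¹ : ℝ) • -v ∈ K :=
    hK.prop.1 hv hv' (by norm_num) (by norm_num) (by norm_num)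
  exact (hK.prop.2 h0).2 (by simp)

theorem IsHalf.linearIndependent (hK : IsHalf C K) (hC : IsProjConvexCone C) (hv0 : v ≠ 0)
    (hv : v ∉ K) (hv' : -v ∉ K) {k : V} (hk : k ∈ K) : LinearIndependent ℝ ![k, v] := by
  rw [LinearIndependent.pair_iff' (hK.prop.2 hk).2]
  rintro a rfl
  rcases lt_trichotomy a 0 with ha | rfl | ha
  · exact hv' (by simpa using hK.smul_mem hC (neg_pos.2 ha) hk)
  · simp at hv0
  · exact hv (hK.smul_mem hC ha hk)

theorem IsHalf.mem_of_segment_subset (hK : IsHalf C K) (hvC : v ∈ C) (hv0 : v ≠ 0)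
    (hLI : ∀ k ∈ K, LinearIndependent ℝ ![k, v]) (h : ∀ k ∈ K, segment ℝ k v ⊆ C) : v ∈ K := by
  refine hK.mem_of_convexHull_insert ?_
  rcases K.eq_empty_or_nonempty with rfl | hne
  · simp [hvC, hv0]
  · rw [convexHull_insert hne, hK.prop.1.convexHull_eq, convexJoin_singleton_left,
      iUnion₂_subset_iff]
    intro k hk w hw
    rw [segment_symm] at hw
    exact ⟨h k hk hw, ne_zero_of_mem_segment_of_linearIndependent (hLI k hk) hw⟩

section Topology

variable [TopologicalSpace V] [IsTopologicalAddGroup V] [ContinuousSMul ℝ V]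

/- The vectors of `K` joined to `v` inside `C` and those joined to `-v` form a closed partition of
`K`, so one of the two parts is all of `K`, and `v` or `-v` can be added to `K`. -/
theorem IsHalf.mem_or_neg_mem (hK : IsHalf C K) (hC : IsProjConvexCone C) (hCc : IsClosed C)
    (hv : v ∈ C) (hv0 : v ≠ 0) : v ∈ K ∨ -v ∈ K := by
  by_contra! hvK
  have hLI : ∀ k ∈ K, LinearIndependent ℝ ![k, v] := fun k hk =>
    hK.linearIndependent hC hv0 hvK.1 hvK.2 hk
  have hLI' : ∀ k ∈ K, LinearIndependent ℝ ![k, -v] := fun k hk =>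
    hK.linearIndependent hC (neg_ne_zero.2 hv0) hvK.2 (by simpa using hvK.1) hk
  have hcases := (isPreconnected_iff_subset_of_disjoint_closed.1 hK.prop.1.isPreconnected)
    {k | segment ℝ k v ⊆ C} {k | segment ℝ k (-v) ⊆ C}
    (isClosed_setOf_segment_subset hCc v) (isClosed_setOf_segment_subset hCc (-v))
    (fun k hk => hC.segment_subset_or (hK.prop.2 hk).1 hv)
    (eq_empty_of_forall_notMem fun k hk =>
      hC.not_segment_subset_neg (hLI k hk.1) hk.2.1 hk.2.2)
  rcases hcases with h | h
  · exact hvK.1 (hK.mem_of_segment_subset hv hv0 hLI h)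
  · exact hvK.2 (hK.mem_of_segment_subset (hC.neg_mem hv) (neg_ne_zero.2 hv0) hLI' h)

theorem IsHalf.mem_of_mem_closure [T2Space V] (hK : IsHalf C K) (hC : IsProjConvexCone C)
    (hCc : IsClosed C) (hv : v ∈ closure K) (hv0 : v ≠ 0) : v ∈ K := by
  have hclosure : closure K ⊆ C := closure_minimal (fun k hk => (hK.prop.2 hk).1) hCc
  by_contra hvK
  have hneg : -v ∈ K := (hK.mem_or_neg_mem hC hCc (hclosure hv) hv0).resolve_left hvK
  have hsegment : ∀ k ∈ K, segment ℝ k v ⊆ C ∧ segment ℝ k (-v) ⊆ C := fun k hk =>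
    ⟨(hK.prop.1.closure.segment_subset (subset_closure hk) hv).trans hclosure,
      (hK.prop.1.segment_subset hk hneg).trans fun w hw => (hK.prop.2 hw).1⟩
  have hray : K ⊆ (fun t : ℝ => t • v) '' Iic 0 := by
    intro k hk
    rcases linearIndependent_pair_or_exists_smul (K := ℝ) hv0 k with hLI | ⟨t, rfl⟩
    · exact absurd (hsegment k hk).2
        (hC.not_segment_subset_neg (LinearIndependent.pair_symm_iff.1 hLI) (hsegment k hk).1)
    · refine ⟨t, mem_Iic.2 (not_lt.1 fun ht => hvK ?_), rfl⟩
      simpa [smul_smul, ht.ne'] using hK.smul_mem hC (inv_pos.2 ht) hk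
  obtain ⟨t, ht, htv⟩ := closure_minimal hray
    ((isClosedEmbedding_smul_left hv0).isClosedMap _ isClosed_Iic) hv
  have : t = 1 := smul_left_injective ℝ hv0 (by simpa using htv)
  exact absurd (mem_Iic.1 ht) (by norm_num [this])

theorem IsHalf.isClosed_insert_zero [T2Space V] (hK : IsHalf C K) (hC : IsProjConvexCone C)
    (hCc : IsClosed C) : IsClosed (insert 0 K) := by
  rw [← closure_subset_iff_isClosed, insert_eq, closure_union, closure_singleton, ← insert_eq]
  intro v hv
  rcases eq_or_ne v 0 with hv0 | hv0
  · exact Or.inl hv0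
  · exact Or.inr (hK.mem_of_mem_closure hC hCc (hv.resolve_left hv0) hv0)

/-- The half `K` with the vertex `0` added to it. -/
def IsHalf.toProperCone [T2Space V] (hK : IsHalf C K) (hC : IsProjConvexCone C)
    (hCc : IsClosed C) : ProperCone ℝ V where
  carrier := insert 0 K
  zero_mem' := mem_insert 0 K
  add_mem' := by
    rintro u v (rfl | hu) (rfl | hv)
    · simp
    · exact Or.inr (by rwa [zero_add])
    · exact Or.inr (by rwa [add_zero])
    · exact Or.inr (hK.add_mem hC hu hv)
  smul_mem' := by
    rintro c v (rfl | hv)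
    · exact Or.inl (smul_zero c)
    · rcases eq_zero_or_pos c with rfl | hc
      · exact Or.inl (zero_smul _ v)
      · exact Or.inr (hK.smul_mem hC hc hv)
  isClosed' := hK.isClosed_insert_zero hC hCc

theorem exists_properCone [T2Space V] (hC : IsProjConvexCone C) (hCc : IsClosed C) :
    ∃ K : ProperCone ℝ V, (K : ConvexCone ℝ V).Salient ∧ ∀ v, v ∈ C ↔ v ∈ K ∨ -v ∈ K := by
  obtain ⟨K, hK⟩ := exists_isHalf C
  have hmem : ∀ v, v ∈ hK.toProperCone hC hCc ↔ v = 0 ∨ v ∈ K := fun v => Iff.rfl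
  refine ⟨hK.toProperCone hC hCc, fun v hv hv0 hv' => ?_, fun v => ?_⟩
  · exact hK.neg_notMem (((hmem v).1 hv).resolve_left hv0)
      (((hmem _).1 hv').resolve_left (neg_ne_zero.2 hv0))
  · rw [hmem, hmem, neg_eq_zero]
    constructor
    · intro hv
      rcases eq_or_ne v 0 with hv0 | hv0
      · exact Or.inl (Or.inl hv0)
      · exact (hK.mem_or_neg_mem hC hCc hv hv0).imp Or.inr Or.inr
    · rintro ((rfl | hv) | (rfl | hv))
      · exact hC.zero_mem
      · exact (hK.prop.2 hv).1
      · exact hC.zero_mem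
      · simpa using hC.neg_mem (hK.prop.2 hv).1

end Topology

end IsProjConvexCone

theorem exists_pos_of_salient [TopologicalSpace V] [IsTopologicalAddGroup V] [ContinuousSMul ℝ V]
    [LocallyConvexSpace ℝ V] {K : ProperCone ℝ V} (hK : (K : ConvexCone ℝ V).Salient) {v : V}
    (hv : v ∈ K) (hv0 : v ≠ 0) : ∃ f : V →L[ℝ] ℝ, (∀ w ∈ K, 0 ≤ f w) ∧ 0 < f v := by
  obtain ⟨f, hf, hfv⟩ := K.hyperplane_separation_point (hK v hv hv0)
  exact ⟨f, hf, by simpa using hfv⟩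

end ProjConvexCone

section Salient

variable {V : Type*} [NormedAddCommGroup V] [NormedSpace ℝ V]

theorem exists_pos_on_compact_of_salient {K : ProperCone ℝ V}
    (hK : (K : ConvexCone ℝ V).Salient) {S : Set V} (hS : IsCompact S) (hSK : S ⊆ K)
    (hS0 : (0 : V) ∉ S) : ∃ f : V →L[ℝ] ℝ, ∀ v ∈ S, 0 < f v := by
  suffices ∃ f : V →L[ℝ] ℝ, (∀ w ∈ K, 0 ≤ f w) ∧ ∀ v ∈ S, v ∈ K → 0 < f v from
    this.imp fun f hf v hv => hf.2 v hv (hSK hv)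
  refine hS.induction_on (p := fun s => ∃ f : V →L[ℝ] ℝ, (∀ w ∈ K, 0 ≤ f w) ∧
    ∀ v ∈ s, v ∈ K → 0 < f v) ⟨0, by simp, by simp⟩ ?_ ?_ ?_
  · rintro s t hst ⟨f, hf, hft⟩
    exact ⟨f, hf, fun v hv => hft v (hst hv)⟩
  · rintro s t ⟨f, hf, hfs⟩ ⟨g, hg, hgt⟩
    refine ⟨f + g, fun v hv => add_nonneg (hf v hv) (hg v hv), ?_⟩
    rintro v (hv | hv) hvK
    · exact add_pos_of_pos_of_nonneg (hfs v hv hvK) (hg v hvK)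
    · exact add_pos_of_nonneg_of_pos (hf v hvK) (hgt v hv hvK)
  · intro v hv
    obtain ⟨f, hf, hfv⟩ := exists_pos_of_salient hK (hSK hv) (ne_of_mem_of_not_mem hv hS0)
    exact ⟨{w | 0 < f w}, mem_nhdsWithin_of_mem_nhds
      ((isOpen_lt continuous_const f.continuous).mem_nhds hfv), f, hf, fun w hw _ => hw⟩

theorem exists_mul_norm_le_of_salient [FiniteDimensional ℝ V] {K : ProperCone ℝ V}
    (hK : (K : ConvexCone ℝ V).Salient) :
    ∃ (f : V →L[ℝ] ℝ) (c : ℝ), 0 < c ∧ ∀ v ∈ K, c * ‖v‖ ≤ f v := by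
  have hS : IsCompact ((K : Set V) ∩ Metric.sphere 0 1) :=
    (isCompact_sphere 0 1).inter_left K.isClosed
  obtain ⟨f, hf⟩ := exists_pos_on_compact_of_salient hK hS inter_subset_left (by simp)
  obtain ⟨c, hc, hcf⟩ : ∃ c > 0, ∀ v ∈ (K : Set V) ∩ Metric.sphere 0 1, c ≤ f v :=
    hS.exists_forall_le' f.continuous.continuousOn hf
  refine ⟨f, c, hc, fun v hv => ?_⟩
  rcases eq_or_ne v 0 with rfl | hv0
  · simp
  · have hn : 0 < ‖v‖ := norm_pos_iff.2 hv0
    have := hcf (‖v‖⁻¹ • v) ⟨K.smul_mem hv (inv_nonneg.2 hn.le), by simp [norm_smul, hn.ne']⟩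
    rwa [map_smul, smul_eq_mul, inv_mul_eq_div, le_div_iff₀ hn] at this

theorem apply_pos_of_mul_norm_le {f : V →L[ℝ] ℝ} {c : ℝ} (hc : 0 < c) {v : V} (hv0 : v ≠ 0)
    (h : c * ‖v‖ ≤ f v) : 0 < f v :=
  (mul_pos hc (norm_pos_iff.2 hv0)).trans_le h

theorem isCompact_setOf_mem_and_apply_eq_one [FiniteDimensional ℝ V] {K : ProperCone ℝ V}
    {m : V →L[ℝ] ℝ} {c : ℝ} (hc : 0 < c) (hm : ∀ w ∈ K, c * ‖w‖ ≤ m w) :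
    IsCompact {w | w ∈ K ∧ m w = 1} := by
  have := FiniteDimensional.proper ℝ V
  refine Metric.isCompact_of_isClosed_isBounded
    (K.isClosed.inter (isClosed_eq m.continuous continuous_const))
    (isBounded_iff_forall_norm_le.2 ⟨1 / c, ?_⟩)
  rintro w ⟨hw, hw1⟩
  rw [le_div_iff₀' hc, ← hw1]
  exact hm w hw

end Salient

section Retraction

theorem contractibleSpace_of_retraction {F : Type*} [AddCommGroup F] [Module ℝ F]
    [TopologicalSpace F] [ContinuousAdd F] [ContinuousSMul ℝ F] {X : Set F} {r : F → F}
    (hr : Continuous r) (hrX : ∀ a, r a ∈ X) (hrid : ∀ a ∈ X, r a = a) :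
    ContractibleSpace X := by
  have := RealTopologicalVectorSpace.contractibleSpace (E := F)
  let ρ : C(F, X) := ⟨fun a => ⟨r a, hrX a⟩, by fun_prop⟩
  let ι : C(X, F) := ⟨Subtype.val, continuous_subtype_val⟩
  have hid : ρ.comp ((ContinuousMap.id F).comp ι) = ContinuousMap.id X :=
    ContinuousMap.ext fun x => Subtype.ext (hrid x x.2)
  rw [contractible_iff_id_nullhomotopic, ← hid]
  exact ((id_nullhomotopic F).comp_right ρ).comp_left ι

theorem exists_retraction_of_dist_le {F : Type*} [PseudoMetricSpace F] {X : Set F}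
    (hX : IsClosed X) {g : (Xᶜ : Set F) → F} (hg : Continuous g) (hgX : ∀ a, g a ∈ X) {M : ℝ}
    (hdist : ∀ a, dist (g a) a ≤ M * Metric.infDist (a : F) X) :
    ∃ r : F → F, Continuous r ∧ (∀ a, r a ∈ X) ∧ ∀ a ∈ X, r a = a := by
  classical
  let r : F → F := fun a => if h : a ∈ X then a else g ⟨a, h⟩
  have hr_mem : ∀ a ∈ X, r a = a := fun a ha => dif_pos ha
  have hr_notMem : ∀ a (ha : a ∉ X), r a = g ⟨a, ha⟩ := fun a ha => dif_neg ha
  have hr_dist : ∀ a, dist (r a) a ≤ M * Metric.infDist a X := by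
    intro a
    by_cases ha : a ∈ X
    · simp [hr_mem a ha, Metric.infDist_zero_of_mem ha]
    · simpa only [hr_notMem a ha] using hdist ⟨a, ha⟩
  refine ⟨r, continuous_iff_continuousAt.2 fun a => ?_, fun a => ?_, hr_mem⟩
  · by_cases ha : a ∈ X
    · have hlim : Tendsto (fun x => M * Metric.infDist x X + dist x a) (𝓝 a) (𝓝 0) := by
        have : Continuous fun x => M * Metric.infDist x X + dist x a :=
          (continuous_const.mul (Metric.continuous_infDist_pt X)).add
            (continuous_id.dist continuous_const)
        simpa [Metric.infDist_zero_of_mem ha] using this.tendsto a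
      rw [ContinuousAt, hr_mem a ha, tendsto_iff_dist_tendsto_zero]
      refine squeeze_zero (fun _ => dist_nonneg) (fun x => ?_) hlim
      exact (dist_triangle _ x _).trans (by gcongr; exact hr_dist x)
    · refine ContinuousOn.continuousAt ?_ (hX.isOpen_compl.mem_nhds ha)
      rw [continuousOn_iff_continuous_domRestrict]
      exact hg.congr fun x => (hr_notMem x x.2).symm
  · by_cases ha : a ∈ X
    · rwa [hr_mem a ha]
    · rw [hr_notMem a ha]
      exact hgX _

end Retraction

section AffineNormalize

variable {𝕜 F : Type*} [NormedField 𝕜]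

/-- The lift of the line through `v` to the affine hyperplane `ℓ = 1`, with value `0` on the kernel
of `ℓ`. -/
def affineNormalize [AddCommGroup F] [Module 𝕜 F] [TopologicalSpace F] (ℓ : F →L[𝕜] 𝕜) (v : F) :
    F :=
  (ℓ v)⁻¹ • v

theorem affineNormalize_smul [AddCommGroup F] [Module 𝕜 F] [TopologicalSpace F] (ℓ : F →L[𝕜] 𝕜)
    {c : 𝕜} (hc : c ≠ 0) (v : F) : affineNormalize ℓ (c • v) = affineNormalize ℓ v := by
  rw [affineNormalize, map_smul, smul_eq_mul, mul_inv, smul_smul, mul_right_comm,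
    inv_mul_cancel₀ hc, one_mul, affineNormalize]

variable [NormedAddCommGroup F] [NormedSpace 𝕜 F] {ℓ : F →L[𝕜] 𝕜} {B : Set F}

theorem continuousOn_affineNormalize (ℓ : F →L[𝕜] 𝕜) :
    ContinuousOn (affineNormalize ℓ) {v | ℓ v ≠ 0} :=
  (ℓ.continuous.continuousOn.inv₀ fun _ h => h).smul continuousOn_id

theorem norm_sub_apply_smul {b : F} (hb : ℓ b ≠ 0) (a : F) :
    ‖b - ℓ b • a‖ = ‖ℓ b‖ * dist (affineNormalize ℓ b) a := by
  rw [dist_eq_norm, ← norm_smul, smul_sub, affineNormalize, smul_inv_smul₀ hb]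

theorem exists_norm_apply_bounds (hBc : IsCompact B) (hℓ : ∀ b ∈ B, ℓ b ≠ 0) :
    ∃ m M : ℝ, 0 < m ∧ 0 < M ∧ ∀ b ∈ B, m ≤ ‖ℓ b‖ ∧ ‖ℓ b‖ ≤ M := by
  have hpos : ∀ b ∈ B, 0 < ‖ℓ b‖ := fun b hb => norm_pos_iff.2 (hℓ b hb)
  obtain ⟨m, hm, hmB⟩ := hBc.exists_forall_le' ℓ.continuous.norm.continuousOn hpos
  obtain ⟨M, hM, hMB⟩ := (hBc.image ℓ.continuous).isBounded.exists_pos_norm_le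
  exact ⟨m, M, hm, hM, fun b hb => ⟨hmB b hb, hMB _ (mem_image_of_mem ℓ hb)⟩⟩

variable [NormedAlgebra ℝ 𝕜] [NormedSpace ℝ F] [IsScalarTower ℝ 𝕜 F]

theorem convex_setOf_norm_sub_apply_smul_lt (ℓ : F →L[𝕜] 𝕜) (a : F) (ρ : ℝ) :
    Convex ℝ {b | ‖b - ℓ b • a‖ < ρ} := by
  convert (convex_ball (0 : F) ρ).linear_preimage
    ((ContinuousLinearMap.id 𝕜 F - ℓ.smulRight a).toLinearMap.restrictScalars ℝ) using 1
  ext b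
  exact mem_ball_zero_iff.symm

/- The fibers of the perspective map over its image need not admit a continuous selection, but off
the image approximate lifts, with an error proportional to the distance from the image, do. -/
theorem exists_continuous_approximate_lift (hBc : IsCompact B) (hB : Convex ℝ B) (hne : B.Nonempty)
    (hℓ : ∀ b ∈ B, ℓ b ≠ 0) :
    ∃ (g : C(((affineNormalize ℓ '' B)ᶜ : Set F), F)) (M : ℝ), ∀ a, g a ∈ B ∧
      dist (affineNormalize ℓ (g a)) a ≤ M * Metric.infDist (a : F) (affineNormalize ℓ '' B) := by
  set X := affineNormalize ℓ '' B
  obtain ⟨m, M, hm, hM, hmM⟩ := exists_norm_apply_bounds hBc hℓ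
  have hX : IsCompact X := hBc.image_of_continuousOn ((continuousOn_affineNormalize ℓ).mono hℓ)
  have hlocal : ∀ a : (Xᶜ : Set F), ∃ b, ∀ᶠ y : (Xᶜ : Set F) in 𝓝 a, b ∈ B ∧
      ‖b - ℓ b • (y : F)‖ < 2 * M * Metric.infDist (y : F) X := by
    rintro ⟨a, ha⟩
    obtain ⟨_, ⟨b, hb, rfl⟩, hdist⟩ := hX.exists_infDist_eq_dist (hne.image _) a
    have hpos : 0 < Metric.infDist a X :=
      (hX.isClosed.notMem_iff_infDist_pos (hne.image _)).1 ha
    have hlt : ‖b - ℓ b • a‖ < 2 * M * Metric.infDist a X := by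
      calc ‖b - ℓ b • a‖ = ‖ℓ b‖ * Metric.infDist a X := by
            rw [norm_sub_apply_smul (hℓ b hb), hdist, dist_comm]
        _ ≤ M * Metric.infDist a X := by gcongr; exact (hmM b hb).2
        _ < 2 * M * Metric.infDist a X := by nlinarith [mul_pos hM hpos]
    have hl : Continuous fun y : (Xᶜ : Set F) => ‖b - ℓ b • (y : F)‖ := by fun_prop
    have hr : Continuous fun y : (Xᶜ : Set F) => 2 * M * Metric.infDist (y : F) X :=
      continuous_const.mul ((Metric.continuous_infDist_pt X).comp continuous_subtype_val)
    exact ⟨b, (hl.continuousAt.eventually_lt hr.continuousAt hlt).mono fun y hy => ⟨hb, hy⟩⟩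
  obtain ⟨g, hg⟩ := exists_continuous_forall_mem_convex_of_local_const
    (fun a : (Xᶜ : Set F) => hB.inter (convex_setOf_norm_sub_apply_smul_lt ℓ (a : F)
      (2 * M * Metric.infDist (a : F) X))) hlocal
  refine ⟨g, 2 * M / m, fun a => ⟨(hg a).1, ?_⟩⟩
  rw [div_mul_eq_mul_div, le_div_iff₀' hm]
  calc m * dist (affineNormalize ℓ (g a)) a
      ≤ ‖ℓ (g a)‖ * dist (affineNormalize ℓ (g a)) a := by gcongr; exact (hmM _ (hg a).1).1
    _ = ‖g a - ℓ (g a) • (a : F)‖ := (norm_sub_apply_smul (hℓ _ (hg a).1) _).symm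
    _ ≤ 2 * M * Metric.infDist (a : F) X := le_of_lt (hg a).2

theorem contractibleSpace_affineNormalize_image (hBc : IsCompact B) (hB : Convex ℝ B)
    (hne : B.Nonempty) (hℓ : ∀ b ∈ B, ℓ b ≠ 0) : ContractibleSpace (affineNormalize ℓ '' B) := by
  obtain ⟨g, M, hg⟩ := exists_continuous_approximate_lift hBc hB hne hℓ
  have hcont := continuousOn_affineNormalize ℓ
  obtain ⟨r, hr, hrX, hrid⟩ := exists_retraction_of_dist_le
    (hBc.image_of_continuousOn (hcont.mono hℓ)).isClosed
    (hcont.comp_continuous g.continuous fun a => hℓ _ (hg a).1)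
    (fun a => mem_image_of_mem _ (hg a).1) fun a => (hg a).2
  exact contractibleSpace_of_retraction hr hrX hrid

end AffineNormalize

section Projectivization

open scoped LinearAlgebra.Projectivization

section Rep

variable {K V : Type*} [DivisionRing K] [AddCommGroup V] [Module K V] {S : Set V}

theorem mk_rep_mem_iff (hS : ∀ c : K, c ≠ 0 → ∀ v, c • v ∈ S ↔ v ∈ S) {v : V} (hv : v ≠ 0) :
    (Projectivization.mk K v hv).rep ∈ S ↔ v ∈ S := by
  obtain ⟨a, ha⟩ := Projectivization.exists_smul_eq_mk_rep K v hv
  rw [← ha]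
  exact hS a a.ne_zero v

theorem mk_rep_mem_submodule_iff (W : Submodule K V) {v : V} (hv : v ≠ 0) :
    (Projectivization.mk K v hv).rep ∈ W ↔ v ∈ W :=
  mk_rep_mem_iff (S := W) (fun _ hc _ => W.smul_mem_iff hc) hv

theorem isQuotientMap_projectivization_mk [TopologicalSpace V] :
    IsQuotientMap (fun v : {v : V // v ≠ 0} => Projectivization.mk K v.1 v.2) :=
  isQuotientMap_quotient_mk'

theorem isOpen_setOf_rep_mem [TopologicalSpace V] (hS : ∀ c : K, c ≠ 0 → ∀ v, c • v ∈ S ↔ v ∈ S)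
    (hSo : IsOpen S) : IsOpen {z : ℙ K V | z.rep ∈ S} := by
  rw [← isQuotientMap_projectivization_mk.isOpen_preimage]
  convert hSo.preimage continuous_subtype_val using 1
  ext v
  exact mk_rep_mem_iff hS v.2

/-- The set of points of the projectivization that have a lift in `S`. -/
def projImage (K : Type*) {V : Type*} [DivisionRing K] [AddCommGroup V] [Module K V] (S : Set V) :
    Set (ℙ K V) :=
  {z | ∃ v ∈ S, ∃ hv : v ≠ 0, Projectivization.mk K v hv = z}

theorem projImage_inter_setOf_rep_mem (S : Set V) (W : Submodule K V) :
    projImage K S ∩ {z | z.rep ∈ W} = projImage K (S ∩ W) := by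
  ext z
  constructor
  · rintro ⟨⟨v, hv, hv0, rfl⟩, hW⟩
    exact ⟨v, ⟨hv, (mk_rep_mem_submodule_iff W hv0).1 hW⟩, hv0, rfl⟩
  · rintro ⟨v, ⟨hv, hW⟩, hv0, rfl⟩
    exact ⟨⟨v, hv, hv0, rfl⟩, (mk_rep_mem_submodule_iff W hv0).2 hW⟩

theorem mk_mem_projImage_iff {S : Set V} {v : V} (hv : v ≠ 0) :
    Projectivization.mk K v hv ∈ projImage K S ↔ ∃ c : K, c ≠ 0 ∧ c • v ∈ S := by
  constructor
  · rintro ⟨w, hw, hw0, h⟩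
    obtain ⟨c, rfl⟩ := (Projectivization.mk_eq_mk_iff' ..).1 h
    exact ⟨c, (smul_ne_zero_iff.1 hw0).1, hw⟩
  · rintro ⟨c, hc, hcv⟩
    exact ⟨c • v, hcv, smul_ne_zero hc hv, (Projectivization.mk_eq_mk_iff' ..).2 ⟨c, rfl⟩⟩

theorem not_setOf_rep_mem_subset_projImage {ℓ : V →ₗ[K] K} (hℓ : ∀ w ∈ S, w ≠ 0 → ℓ w ≠ 0)
    {W : Submodule K V} (hW : 1 < Module.finrank K W) :
    ¬ {z : ℙ K V | z.rep ∈ W} ⊆ projImage K S := by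
  intro hsub
  have := Module.finite_of_finrank_pos (zero_lt_one.trans hW)
  obtain ⟨⟨w, hw⟩, hℓw, hw0⟩ := Submodule.exists_mem_ne_zero_of_ne_bot <|
    LinearMap.ker_ne_bot_of_finrank_lt (f := ℓ.comp W.subtype) (by simpa using hW)
  have hw0 : w ≠ 0 := fun h => hw0 (Subtype.ext h)
  have hℓw : ℓ w = 0 := hℓw
  obtain ⟨c, hc, hcw⟩ := (mk_mem_projImage_iff hw0).1 (hsub ((mk_rep_mem_submodule_iff W hw0).2 hw))
  exact hℓ _ hcw (smul_ne_zero hc hw0) (by rw [map_smul, hℓw, smul_zero])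

end Rep

section Hausdorff

variable {𝕜 V : Type*} [NormedField 𝕜] [AddCommGroup V] [Module 𝕜 V] [TopologicalSpace V]

theorem isOpen_setOf_norm_apply_rep_lt (f g : V →L[𝕜] 𝕜) :
    IsOpen {z : ℙ 𝕜 V | ‖f z.rep‖ < ‖g z.rep‖} := by
  refine isOpen_setOf_rep_mem (S := {v | ‖f v‖ < ‖g v‖}) (fun c hc v => ?_)
    (isOpen_lt f.continuous.norm g.continuous.norm)
  simp [hc]

theorem exists_continuousLinearMap_apply_eq [SeparatingDual 𝕜 V] {ι : Type*} [Finite ι] {v : ι → V}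
    (hv : LinearIndependent 𝕜 v) (c : ι → 𝕜) : ∃ f : V →L[𝕜] 𝕜, ∀ i, f (v i) = c i := by
  classical
  have := Fintype.ofFinite ι
  obtain ⟨f, hf⟩ := SeparatingDual.dualMap_surjective_iff.2
    (LinearIndependent.fintypeLinearCombination_injective hv) (Fintype.linearCombination 𝕜 c)
  refine ⟨f, fun i => ?_⟩
  simpa using LinearMap.congr_fun hf (Pi.single i 1)

instance projectivization_t2Space [SeparatingDual 𝕜 V] : T2Space (ℙ 𝕜 V) := by
  refine ⟨fun x y hxy => ?_⟩
  have hLI : LinearIndependent 𝕜 ![x.rep, y.rep] := by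
    rwa [Projectivization.linearIndependent_pair_iff_ne]
  obtain ⟨f, hf⟩ := exists_continuousLinearMap_apply_eq hLI ![1, 0]
  obtain ⟨g, hg⟩ := exists_continuousLinearMap_apply_eq hLI ![0, 1]
  simp only [Fin.forall_fin_two, Matrix.cons_val_zero, Matrix.cons_val_one] at hf hg
  refine ⟨_, _, isOpen_setOf_norm_apply_rep_lt g f, isOpen_setOf_norm_apply_rep_lt f g,
    by simp [hf, hg], by simp [hf, hg], disjoint_left.2 ?_⟩
  exact fun z (h : ‖g z.rep‖ < ‖f z.rep‖) => lt_asymm h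

end Hausdorff

section Chart

variable {𝕜 F : Type*} [NormedField 𝕜] [NormedAddCommGroup F] [NormedSpace 𝕜 F] {ℓ : F →L[𝕜] 𝕜}

theorem affineNormalize_rep_mk {v : F} (hv : v ≠ 0) :
    affineNormalize ℓ (Projectivization.mk 𝕜 v hv).rep = affineNormalize ℓ v := by
  obtain ⟨a, ha⟩ := Projectivization.exists_smul_eq_mk_rep 𝕜 v hv
  rw [← ha, Units.smul_def, affineNormalize_smul ℓ a.ne_zero]

theorem smul_mem_setOf_apply_ne_zero_iff (c : 𝕜) (hc : c ≠ 0) (v : F) :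
    c • v ∈ {v | ℓ v ≠ 0} ↔ v ∈ {v | ℓ v ≠ 0} := by
  simp [hc]

theorem apply_mk_rep_ne_zero_iff {v : F} (hv : v ≠ 0) :
    ℓ (Projectivization.mk 𝕜 v hv).rep ≠ 0 ↔ ℓ v ≠ 0 :=
  mk_rep_mem_iff (S := {v | ℓ v ≠ 0}) smul_mem_setOf_apply_ne_zero_iff hv

theorem continuousOn_affineNormalize_rep :
    ContinuousOn (fun z : ℙ 𝕜 F => affineNormalize ℓ z.rep) {z | ℓ z.rep ≠ 0} := by
  have hopen : IsOpen {z : ℙ 𝕜 F | ℓ z.rep ≠ 0} :=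
    isOpen_setOf_rep_mem smul_mem_setOf_apply_ne_zero_iff
      (isOpen_ne_fun ℓ.continuous continuous_const)
  rw [isQuotientMap_projectivization_mk.continuousOn_isOpen_iff hopen]
  refine ((continuousOn_affineNormalize ℓ).comp continuous_subtype_val.continuousOn
    fun v hv => (apply_mk_rep_ne_zero_iff v.2).1 hv).congr fun v _ => affineNormalize_rep_mk v.2

theorem isEmbedding_affineNormalize_rep {E : Set (ℙ 𝕜 F)} (hE : ∀ z ∈ E, ℓ z.rep ≠ 0) :
    IsEmbedding fun z : E => affineNormalize ℓ z.1.rep := by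
  have hne : ∀ z : E, affineNormalize ℓ z.1.rep ≠ 0 := fun z =>
    smul_ne_zero (inv_ne_zero (hE z z.2)) z.1.rep_nonzero
  have hcont : Continuous fun z : E => affineNormalize ℓ z.1.rep :=
    continuousOn_affineNormalize_rep.comp_continuous continuous_subtype_val fun z => hE z z.2
  refine IsEmbedding.subtypeVal.comp (IsEmbedding.of_comp (hcont.subtype_mk hne)
    (isQuotientMap_projectivization_mk (K := 𝕜)).continuous ?_)
  convert IsEmbedding.subtypeVal (p := (· ∈ E)) using 1
  funext z
  calc Projectivization.mk 𝕜 (affineNormalize ℓ z.1.rep) (hne z)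
      = Projectivization.mk 𝕜 z.1.rep z.1.rep_nonzero :=
        (Projectivization.mk_eq_mk_iff' ..).2 ⟨_, rfl⟩
    _ = z := z.1.mk_rep

theorem range_affineNormalize_rep {S : Set F} (hS : ∀ v ∈ S, v ≠ 0) :
    range (fun z : projImage 𝕜 S => affineNormalize ℓ z.1.rep) = affineNormalize ℓ '' S := by
  ext w
  constructor
  · rintro ⟨⟨_, v, hv, hv0, rfl⟩, rfl⟩
    exact ⟨v, hv, (affineNormalize_rep_mk hv0).symm⟩
  · rintro ⟨v, hv, rfl⟩
    exact ⟨⟨_, v, hv, hS v hv, rfl⟩, affineNormalize_rep_mk (hS v hv)⟩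

variable [NormedAlgebra ℝ 𝕜] [NormedSpace ℝ F] [IsScalarTower ℝ 𝕜 F]
  {Q : ProperCone ℝ F}

theorem projImage_eq_projImage_slice {m : F →L[ℝ] ℝ} (hm : ∀ w ∈ Q, w ≠ 0 → 0 < m w) :
    projImage 𝕜 (Q : Set F) = projImage 𝕜 {w | w ∈ Q ∧ m w = 1} := by
  ext z
  constructor
  · rintro ⟨w, hw, hw0, rfl⟩
    have hpos : 0 < m w := hm w hw hw0
    refine ⟨(m w)⁻¹ • w, ⟨Q.smul_mem hw (inv_nonneg.2 hpos.le), by simp [hpos.ne']⟩,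
      smul_ne_zero (inv_ne_zero hpos.ne') hw0, ?_⟩
    exact (Projectivization.mk_eq_mk_iff' ..).2 ⟨algebraMap ℝ 𝕜 (m w)⁻¹, algebraMap_smul ..⟩
  · rintro ⟨w, ⟨hw, -⟩, hw0, rfl⟩
    exact ⟨w, hw, hw0, rfl⟩

theorem contractibleSpace_projImage [FiniteDimensional ℝ F] (hQ : (Q : ConvexCone ℝ F).Salient)
    (hℓ : ∀ w ∈ Q, w ≠ 0 → ℓ w ≠ 0) (hne : (projImage 𝕜 (Q : Set F)).Nonempty) :
    ContractibleSpace (projImage 𝕜 (Q : Set F)) := by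
  obtain ⟨m, c, hc, hm⟩ := exists_mul_norm_le_of_salient hQ
  have hm_pos : ∀ w ∈ Q, w ≠ 0 → 0 < m w := fun w hw hw0 =>
    apply_pos_of_mul_norm_le hc hw0 (hm w hw)
  rw [projImage_eq_projImage_slice hm_pos] at hne ⊢
  set B := {w | w ∈ Q ∧ m w = 1}
  have hB0 : ∀ b ∈ B, b ≠ 0 := by
    rintro b ⟨-, hb⟩ rfl
    simp at hb
  have hBconv : Convex ℝ B :=
    (Q : ConvexCone ℝ F).convex.inter (convex_hyperplane m.toLinearMap.isLinear 1)
  have hBne : B.Nonempty := by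
    obtain ⟨_, b, hb, -⟩ := hne
    exact ⟨b, hb⟩
  have hBℓ : ∀ b ∈ B, ℓ b ≠ 0 := fun b hb => hℓ b hb.1 (hB0 b hb)
  have hemb : IsEmbedding fun z : projImage 𝕜 B => affineNormalize ℓ z.1.rep := by
    refine isEmbedding_affineNormalize_rep ?_
    rintro _ ⟨b, hb, hb0, rfl⟩
    exact (apply_mk_rep_ne_zero_iff hb0).2 (hBℓ b hb)
  have := contractibleSpace_affineNormalize_image (isCompact_setOf_mem_and_apply_eq_one hc hm)
    hBconv hBne hBℓ
  rw [← range_affineNormalize_rep hB0] at this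
  exact hemb.toHomeomorph.contractibleSpace

theorem contractibleSpace_projImage_inter [FiniteDimensional ℝ F]
    (hQ : (Q : ConvexCone ℝ F).Salient) (hℓ : ∀ w ∈ Q, w ≠ 0 → ℓ w ≠ 0) (W : Submodule 𝕜 F)
    (hne : (projImage 𝕜 (Q : Set F) ∩ {z | z.rep ∈ W}).Nonempty) :
    ContractibleSpace ↥(projImage 𝕜 (Q : Set F) ∩ {z | z.rep ∈ W}) := by
  let QW : ProperCone ℝ F :=
    { toSubmodule := (Q : PointedCone ℝ F) ⊓ (W.restrictScalars ℝ).restrictScalars _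
      isClosed' := Q.isClosed.inter (W.restrictScalars ℝ).closed_of_finiteDimensional }
  have hQW : projImage 𝕜 (Q : Set F) ∩ {z | z.rep ∈ W} = projImage 𝕜 (QW : Set F) :=
    projImage_inter_setOf_rep_mem _ W
  rw [hQW] at hne ⊢
  exact contractibleSpace_projImage (fun w hw hw0 hw' => hQ w hw.1 hw0 hw'.1)
    (fun w hw => hℓ w hw.1) hne

end Chart

end Projectivization

section ConeOver

open scoped LinearAlgebra.Projectivization

section

variable {K V : Type*} [DivisionRing K] [AddCommGroup V] [Module K V]

/-- The cone of all lifts of points of `D`, together with the origin. -/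
def coneOver (D : Set (ℙ K V)) : Set V :=
  {v | ∀ h : v ≠ 0, Projectivization.mk K v h ∈ D}

variable {D : Set (ℙ K V)}

theorem rep_mem_coneOver {x : ℙ K V} : x.rep ∈ coneOver D ↔ x ∈ D := by
  refine ⟨fun h => ?_, fun h h' => ?_⟩
  · simpa only [Projectivization.mk_rep] using h x.rep_nonzero
  · simpa only [Projectivization.mk_rep] using h

theorem smul_mem_coneOver (c : K) {v : V} (hv : v ∈ coneOver D) : c • v ∈ coneOver D := by
  intro h
  have hv0 : v ≠ 0 := (smul_ne_zero_iff.1 h).2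
  have : Projectivization.mk K (c • v) h = Projectivization.mk K v hv0 :=
    (Projectivization.mk_eq_mk_iff' ..).2 ⟨c, rfl⟩
  exact this ▸ hv hv0

theorem isClosed_coneOver [TopologicalSpace V] [T1Space V] (hD : IsClosed D) :
    IsClosed (coneOver D) := by
  have hcompl : (coneOver D)ᶜ = Subtype.val ''
      ((fun v : {v : V // v ≠ 0} => Projectivization.mk K v.1 v.2) ⁻¹' Dᶜ) := by
    ext v
    simp [coneOver]
  rw [← isOpen_compl_iff, hcompl]
  exact isOpen_ne.isOpenEmbedding_subtypeVal.isOpenMap _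
    (hD.isOpen_compl.preimage isQuotientMap_projectivization_mk.continuous)

theorem pos_and_pos_of_combination_notMem_coneOver [PartialOrder K] {u v : V}
    (hu : u ∈ coneOver D) (hv : v ∈ coneOver D) {a b : K} (ha : 0 ≤ a) (hb : 0 ≤ b)
    (h : a • u + b • v ∉ coneOver D) : 0 < a ∧ 0 < b := by
  refine ⟨ha.lt_of_ne fun h0 => h ?_, hb.lt_of_ne fun h0 => h ?_⟩
  · simpa [← h0] using smul_mem_coneOver b hv
  · simpa [← h0] using smul_mem_coneOver a hu

theorem finrank_span_pair_eq_two {u v : V} (h : LinearIndependent K ![u, v]) :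
    Module.finrank K (Submodule.span K {u, v}) = 2 := by
  rw [← Matrix.range_cons_cons_empty u v ![]]
  simpa using finrank_span_eq_card h

end

section Connected

variable {V : Type*} [AddCommGroup V] [Module ℝ V] [TopologicalSpace V] {S : Set (ℙ ℝ V)}

theorem mk_rep_apply_mul_apply_pos_iff (φ ψ : V →L[ℝ] ℝ) {v : V} (hv : v ≠ 0) :
    0 < φ (Projectivization.mk ℝ v hv).rep * ψ (Projectivization.mk ℝ v hv).rep ↔
      0 < φ v * ψ v := by
  obtain ⟨a, ha⟩ := Projectivization.exists_smul_eq_mk_rep ℝ v hv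
  have ha2 : 0 < (a : ℝ) * a := mul_self_pos.2 a.ne_zero
  rw [← ha, Units.smul_def, map_smul, map_smul, smul_mul_smul_comm, smul_eq_mul,
    mul_pos_iff_of_pos_left ha2]

theorem isOpen_setOf_apply_rep_mul_apply_rep_pos (φ ψ : V →L[ℝ] ℝ) :
    IsOpen {z : ℙ ℝ V | 0 < φ z.rep * ψ z.rep} := by
  have hpre : (fun v : {v : V // v ≠ 0} => Projectivization.mk ℝ v.1 v.2) ⁻¹'
      {z | 0 < φ z.rep * ψ z.rep} = {v | 0 < φ v.1 * ψ v.1} :=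
    Set.ext fun v => mk_rep_apply_mul_apply_pos_iff φ ψ v.2
  rw [← isQuotientMap_projectivization_mk.isOpen_preimage, hpre]
  exact isOpen_lt continuous_const ((φ.continuous.mul ψ.continuous).comp continuous_subtype_val)

theorem apply_mul_apply_pos_of_isPreconnected (hS : IsPreconnected S) {φ ψ : V →L[ℝ] ℝ}
    (hφ : ∀ z ∈ S, φ z.rep ≠ 0) (hψ : ∀ z ∈ S, ψ z.rep ≠ 0) {x y : ℙ ℝ V} (hx : x ∈ S)
    (hy : y ∈ S) (hpos : 0 < φ x.rep * ψ x.rep) : 0 < φ y.rep * ψ y.rep := by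
  by_contra hneg
  have hcover : ∀ z ∈ S, 0 < φ z.rep * ψ z.rep ∨ 0 < (-φ) z.rep * ψ z.rep := fun z hz => by
    rcases (mul_ne_zero (hφ z hz) (hψ z hz)).lt_or_gt with h | h
    · exact Or.inr (by simpa using h)
    · exact Or.inl h
  obtain ⟨z, -, hz, hz'⟩ := hS _ _ (isOpen_setOf_apply_rep_mul_apply_rep_pos φ ψ)
    (isOpen_setOf_apply_rep_mul_apply_rep_pos (-φ) ψ) hcover ⟨x, hx, hpos⟩
    ⟨y, hy, (hcover y hy).resolve_left hneg⟩
  have hz : 0 < φ z.rep * ψ z.rep := hz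
  have hz' : 0 < -φ z.rep * ψ z.rep := hz'
  linarith

/- The functional whose kernel meets the plane spanned by `u` and `v` in the line through the
missing vector. -/
theorem exists_functional_of_combination_notMem_coneOver [SeparatingDual ℝ V] {D : Set (ℙ ℝ V)}
    {u v : V} (hLI : LinearIndependent ℝ ![u, v]) {a b : ℝ} (hb : b ≠ 0)
    (h : a • u + b • v ∉ coneOver D) : ∃ φ : V →L[ℝ] ℝ, φ u = -b ∧ φ v = a ∧
      ∀ z ∈ D ∩ {z | z.rep ∈ Submodule.span ℝ {u, v}}, φ z.rep ≠ 0 := by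
  obtain ⟨φ, hφ⟩ := exists_continuousLinearMap_apply_eq hLI ![-b, a]
  obtain ⟨hφu, hφv⟩ : φ u = -b ∧ φ v = a := ⟨hφ 0, hφ 1⟩
  refine ⟨φ, hφu, hφv, ?_⟩
  rintro z ⟨hzD, hz⟩ hφz
  obtain ⟨α, β, hαβ⟩ := Submodule.mem_span_pair.1 hz
  rw [← hαβ, map_add, map_smul, map_smul, hφu, hφv, smul_eq_mul, smul_eq_mul] at hφz
  have hα : α = β * a / b := by
    rw [eq_div_iff hb]
    linarith
  have hβ : β ≠ 0 := by
    rintro rfl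
    exact z.rep_nonzero (by simp [← hαβ, hα])
  refine h ?_
  convert smul_mem_coneOver (b / β) (rep_mem_coneOver.2 hzD) using 1
  rw [← hαβ, smul_add, smul_smul, smul_smul, hα, div_mul_cancel₀ _ hβ]
  congr 2
  field_simp

end Connected

variable {n : ℕ} {D : Set (RP n)} {u v : RV n}

theorem exists_combination_notMem_coneOver (hD : convexR D) (h : LinearIndependent ℝ ![u, v]) :
    ∃ a b : ℝ, a • u + b • v ∉ coneOver D := by
  obtain ⟨x, hx, hxD⟩ := not_subset.1 (hD.1 _ ⟨_, finrank_span_pair_eq_two h, rfl⟩)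
  obtain ⟨a, b, hab⟩ := Submodule.mem_span_pair.1 hx
  exact ⟨a, b, fun hC => hxD (rep_mem_coneOver.1 (hab ▸ hC))⟩

/- If both segments left the cone, the trace of `D` on the line through the classes of `u` and `v`
would avoid two points separating these classes. -/
theorem segment_subset_coneOver_or_of_linearIndependent (hD : convexR D)
    (hLI : LinearIndependent ℝ ![u, v]) (hu : u ∈ coneOver D) (hv : v ∈ coneOver D) :
    segment ℝ u v ⊆ coneOver D ∨ segment ℝ u (-v) ⊆ coneOver D := by
  by_contra! hcon
  obtain ⟨_, ⟨a, b, ha, hb, -, rfl⟩, hp⟩ := not_subset.1 hcon.1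
  obtain ⟨_, ⟨c, d, hc, hd, -, rfl⟩, hq⟩ := not_subset.1 hcon.2
  have hv' : -v ∈ coneOver D := by simpa using smul_mem_coneOver (-1 : ℝ) hv
  obtain ⟨ha, hb⟩ := pos_and_pos_of_combination_notMem_coneOver hu hv ha hb hp
  obtain ⟨hc, hd⟩ := pos_and_pos_of_combination_notMem_coneOver hu hv' hc hd hq
  rw [smul_neg, ← neg_smul] at hq
  obtain ⟨φ, hφu, hφv, hφ⟩ := exists_functional_of_combination_notMem_coneOver hLI hb.ne' hp
  obtain ⟨ψ, hψu, hψv, hψ⟩ :=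
    exists_functional_of_combination_notMem_coneOver hLI (neg_ne_zero.2 hd.ne') hq
  have hu0 : u ≠ 0 := hLI.ne_zero 0
  have hv0 : v ≠ 0 := hLI.ne_zero 1
  have hpos := apply_mul_apply_pos_of_isPreconnected
    (hD.2 _ ⟨_, finrank_span_pair_eq_two hLI, rfl⟩) hφ hψ
    ⟨hv hv0, (mk_rep_mem_submodule_iff _ hv0).2 (Submodule.subset_span (by simp))⟩
    ⟨hu hu0, (mk_rep_mem_submodule_iff _ hu0).2 (Submodule.subset_span (by simp))⟩
  rw [mk_rep_apply_mul_apply_pos_iff, mk_rep_apply_mul_apply_pos_iff, hφu, hφv, hψu, hψv] at hpos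
  nlinarith [hpos (mul_pos ha hc), mul_pos hb hd]

theorem segment_smul_subset_coneOver (hu : u ∈ coneOver D) (r : ℝ) :
    segment ℝ u (r • u) ⊆ coneOver D := by
  rintro _ ⟨a, b, -, -, -, rfl⟩
  rw [smul_smul, ← add_smul]
  exact smul_mem_coneOver _ hu

theorem isProjConvexCone_coneOver (hD : convexR D) : IsProjConvexCone (coneOver D) where
  zero_mem h := absurd rfl h
  smul_mem := smul_mem_coneOver
  exists_notMem := exists_combination_notMem_coneOver hD
  segment_subset_or {u v} hu hv := by
    rcases eq_or_ne u 0 with rfl | hu0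
    · refine Or.inl ?_
      rw [segment_symm]
      simpa only [zero_smul] using segment_smul_subset_coneOver hv 0
    · rcases linearIndependent_pair_or_exists_smul (K := ℝ) hu0 v with hLI | ⟨r, rfl⟩
      · exact segment_subset_coneOver_or_of_linearIndependent hD hLI hu hv
      · exact Or.inl (segment_smul_subset_coneOver hu r)

end ConeOver

section Tube

variable {n : ℕ}

/-- The real part of a complex vector. -/
def reVec : CV n →L[ℝ] RV n :=
  ContinuousLinearMap.piMap fun _ => Complex.reCLM

/-- The imaginary part of a complex vector. -/
def imVec : CV n →L[ℝ] RV n :=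
  ContinuousLinearMap.piMap fun _ => Complex.imCLM

theorem reVec_smul_cplx (c : ℂ) (v : RV n) : reVec (c • cplx v) = c.re • v := by
  ext i
  simp [reVec, cplx]

theorem imVec_smul_cplx (c : ℂ) (v : RV n) : imVec (c • cplx v) = c.im • v := by
  ext i
  simp [imVec, cplx]

theorem reVec_I_smul (w : CV n) : reVec (Complex.I • w) = -imVec w := by
  ext i
  simp [reVec, imVec]

theorem cplx_reVec_add_I_smul_cplx_imVec (w : CV n) :
    cplx (reVec w) + Complex.I • cplx (imVec w) = w := by
  ext i
  simp [reVec, imVec, cplx, mul_comm Complex.I, Complex.re_add_im]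

theorem cplx_smul (r : ℝ) (v : RV n) : cplx (r • v) = (r : ℂ) • cplx v := by
  ext i
  simp [cplx]

theorem cplx_neg (v : RV n) : cplx (-v) = -cplx v := by
  ext i
  simp [cplx]

theorem cplx_zero : cplx (0 : RV n) = 0 :=
  funext fun _ => Complex.ofReal_zero

theorem eq_zero_of_reVec_eq_zero_of_imVec_eq_zero {w : CV n} (hre : reVec w = 0)
    (him : imVec w = 0) : w = 0 := by
  rw [← cplx_reVec_add_I_smul_cplx_imVec w, hre, him, cplx_zero, smul_zero, add_zero]

/-- The cone `K + iK` in the complexification of the space of `K`. -/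
def complexCone (K : ProperCone ℝ (RV n)) : ProperCone ℝ (CV n) :=
  K.comap reVec ⊓ K.comap imVec

theorem mem_complexCone {K : ProperCone ℝ (RV n)} {w : CV n} :
    w ∈ complexCone K ↔ reVec w ∈ K ∧ imVec w ∈ K :=
  Iff.rfl

theorem cplx_mem_complexCone {K : ProperCone ℝ (RV n)} {v : RV n} (hv : v ∈ K) :
    cplx v ∈ complexCone K :=
  ⟨hv, K.zero_mem⟩

theorem salient_complexCone {K : ProperCone ℝ (RV n)} (hK : (K : ConvexCone ℝ (RV n)).Salient) :
    (complexCone K : ConvexCone ℝ (CV n)).Salient := by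
  intro w hw hw0 hneg
  obtain ⟨hre, him⟩ := mem_complexCone.1 hw
  obtain ⟨hre', him'⟩ := mem_complexCone.1 hneg
  rw [map_neg] at hre' him'
  exact hw0 (eq_zero_of_reVec_eq_zero_of_imVec_eq_zero
    (by_contra fun h => hK _ hre h hre') (by_contra fun h => hK _ him h him'))

/-- The complex-linear extension of a real functional. -/
def complexify (ℓ : RV n →L[ℝ] ℝ) : CV n →L[ℂ] ℂ :=
  StrongDual.extendRCLike (ℓ.comp reVec)

theorem complexify_apply (ℓ : RV n →L[ℝ] ℝ) (w : CV n) :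
    complexify ℓ w = ⟨ℓ (reVec w), ℓ (imVec w)⟩ := by
  apply Complex.ext <;>
    simp [complexify, StrongDual.extendRCLike_apply, reVec_I_smul]

theorem complexify_ne_zero_of_mem_complexCone {K : ProperCone ℝ (RV n)} {ℓ : RV n →L[ℝ] ℝ}
    (hℓ : ∀ v ∈ K, v ≠ 0 → ℓ v ≠ 0) {w : CV n} (hw : w ∈ complexCone K) (hw0 : w ≠ 0) :
    complexify ℓ w ≠ 0 := by
  rw [complexify_apply]
  intro h
  obtain ⟨hre, him⟩ := Complex.ext_iff.1 h
  exact hw0 (eq_zero_of_reVec_eq_zero_of_imVec_eq_zero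
    (by_contra fun h0 => hℓ _ hw.1 h0 hre) (by_contra fun h0 => hℓ _ hw.2 h0 him))

/- Two complex numbers enclosing an angle of at most `π / 2` can be rotated into the closed first
quadrant, by bringing the first one in clockwise order onto the positive real axis. -/
theorem exists_mul_re_nonneg_mul_im_nonneg {a b : ℂ} (h : 0 ≤ (a * conj b).re) :
    ∃ c : ℂ, c ≠ 0 ∧ (0 ≤ (c * a).re ∧ 0 ≤ (c * a).im) ∧ 0 ≤ (c * b).re ∧ 0 ≤ (c * b).im := by
  have key : ∀ {x y : ℂ}, x ≠ 0 → 0 ≤ (conj x * y).re → 0 ≤ (conj x * y).im →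
      ∃ c : ℂ, c ≠ 0 ∧ (0 ≤ (c * x).re ∧ 0 ≤ (c * x).im) ∧ 0 ≤ (c * y).re ∧ 0 ≤ (c * y).im := by
    intro x y hx hre him
    refine ⟨conj x, (map_ne_zero _).2 hx, ?_, hre, him⟩
    rw [← Complex.normSq_eq_conj_mul_self, Complex.ofReal_re, Complex.ofReal_im]
    exact ⟨Complex.normSq_nonneg x, le_rfl⟩
  have hconj : conj a * b = conj (a * conj b) := by rw [map_mul, Complex.conj_conj]
  rcases eq_or_ne a 0 with rfl | ha
  · rcases eq_or_ne b 0 with rfl | hb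
    · exact ⟨1, one_ne_zero, by simp⟩
    · obtain ⟨c, hc, hcb, hca⟩ := key hb (y := 0) (by simp) (by simp)
      exact ⟨c, hc, hca, hcb⟩
  rcases eq_or_ne b 0 with rfl | hb
  · exact key ha (by simp) (by simp)
  rcases le_total 0 (a * conj b).im with him | him
  · obtain ⟨c, hc, hcb, hca⟩ := key hb (mul_comm a (conj b) ▸ h) (mul_comm a (conj b) ▸ him)
    exact ⟨c, hc, hca, hcb⟩
  · exact key ha (by rwa [hconj, Complex.conj_re]) (by rwa [hconj, Complex.conj_im, neg_nonneg])

theorem exists_smul_mem_complexCone {K : ProperCone ℝ (RV n)} {v₀ v₁ : RV n} (hv₀ : v₀ ∈ K)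
    (hv₁ : v₁ ∈ K) {c₀ c₁ : ℂ} (hc : 0 ≤ (c₀ * conj c₁).re) :
    ∃ c : ℂ, c ≠ 0 ∧ c • (c₀ • cplx v₀ + c₁ • cplx v₁) ∈ complexCone K := by
  obtain ⟨c, hc0, ⟨hre₀, him₀⟩, hre₁, him₁⟩ := exists_mul_re_nonneg_mul_im_nonneg hc
  refine ⟨c, hc0, ?_⟩
  rw [smul_add, smul_smul, smul_smul, mem_complexCone, map_add, map_add, reVec_smul_cplx,
    reVec_smul_cplx, imVec_smul_cplx, imVec_smul_cplx]
  exact ⟨K.add_mem (K.smul_mem hv₀ hre₀) (K.smul_mem hv₁ hre₁),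
    K.add_mem (K.smul_mem hv₀ him₀) (K.smul_mem hv₁ him₁)⟩

variable {D : Set (RP n)} {K : ProperCone ℝ (RV n)}

theorem realSeg_subset_iff {v₀ v₁ : RV n} :
    realSeg v₀ v₁ ⊆ D ↔ ∀ s t : ℝ, 0 ≤ s * t → s • v₀ + t • v₁ ∈ coneOver D := by
  refine ⟨fun h s t hst hne => h ⟨s, t, hst, hne, rfl⟩, ?_⟩
  rintro h _ ⟨s, t, hst, hne, rfl⟩
  exact h s t hst hne

theorem realSeg_subset_of_mem (hK : ∀ v, v ∈ coneOver D ↔ v ∈ K ∨ -v ∈ K) {v₀ v₁ : RV n}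
    (hv₀ : v₀ ∈ K) (hv₁ : v₁ ∈ K) : realSeg v₀ v₁ ⊆ D := by
  refine realSeg_subset_iff.2 fun s t hst => (hK _).2 ?_
  rcases mul_nonneg_iff.1 hst with ⟨hs, ht⟩ | ⟨hs, ht⟩
  · exact Or.inl (K.add_mem (K.smul_mem hv₀ hs) (K.smul_mem hv₁ ht))
  · right
    rw [neg_add, ← neg_smul, ← neg_smul]
    exact K.add_mem (K.smul_mem hv₀ (neg_nonneg.2 hs)) (K.smul_mem hv₁ (neg_nonneg.2 ht))

theorem mk_mem_eTube {v₀ v₁ : RV n} (hv₀ : v₀ ≠ 0) (hv₁ : v₁ ≠ 0) (h : realSeg v₀ v₁ ⊆ D)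
    {c₀ c₁ : ℂ} (hc : 0 ≤ (c₀ * conj c₁).re) {w : CV n} (hw : w ≠ 0)
    (hcw : c₀ • cplx v₀ + c₁ • cplx v₁ = w) : Projectivization.mk ℂ w hw ∈ eTube D := by
  subst hcw
  simp only [eTube, mem_iUnion]
  exact ⟨v₀, v₁, hv₀, hv₁, h, c₀, c₁, hc, hw, rfl⟩

theorem mk_mem_eTube_of_mem_complexCone (hK : ∀ v, v ∈ coneOver D ↔ v ∈ K ∨ -v ∈ K) {w : CV n}
    (hw0 : w ≠ 0) (hw : w ∈ complexCone K) : Projectivization.mk ℂ w hw0 ∈ eTube D := by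
  obtain ⟨hre, him⟩ := mem_complexCone.1 hw
  have hdecomp := cplx_reVec_add_I_smul_cplx_imVec w
  rcases eq_or_ne (reVec w) 0 with hre0 | hre0
  · have him0 : imVec w ≠ 0 := fun h => hw0 (eq_zero_of_reVec_eq_zero_of_imVec_eq_zero hre0 h)
    rw [hre0, cplx_zero] at hdecomp
    exact mk_mem_eTube him0 him0 (realSeg_subset_of_mem hK him him) (c₀ := 0) (c₁ := Complex.I)
      (by simp) hw0 (by rw [zero_smul, hdecomp])
  rcases eq_or_ne (imVec w) 0 with him0 | him0
  · rw [him0, cplx_zero, smul_zero] at hdecomp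
    exact mk_mem_eTube hre0 hre0 (realSeg_subset_of_mem hK hre hre) (c₀ := 1) (c₁ := 0) (by simp)
      hw0 (by rw [one_smul, zero_smul, hdecomp])
  · exact mk_mem_eTube hre0 him0 (realSeg_subset_of_mem hK hre him) (c₀ := 1) (c₁ := Complex.I)
      (by simp) hw0 (by rw [one_smul, hdecomp])

/- With mixed signs, the segment from `v₀` to `-v₁` would lie in the cone as well. -/
theorem mem_and_mem_or_of_segment_subset (hD : convexR D)
    (hK : ∀ v, v ∈ coneOver D ↔ v ∈ K ∨ -v ∈ K) {v₀ v₁ : RV n}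
    (hLI : LinearIndependent ℝ ![v₀, v₁]) (h : segment ℝ v₀ v₁ ⊆ coneOver D) :
    (v₀ ∈ K ∧ v₁ ∈ K) ∨ (-v₀ ∈ K ∧ -v₁ ∈ K) := by
  have hnot := (isProjConvexCone_coneOver hD).not_segment_subset_neg hLI h
  rcases (hK v₀).1 (h (left_mem_segment ..)) with h₀ | h₀ <;>
    rcases (hK v₁).1 (h (right_mem_segment ..)) with h₁ | h₁
  · exact Or.inl ⟨h₀, h₁⟩
  · exact absurd (fun v hv => (hK v).2 (Or.inl (K.convex.segment_subset h₀ h₁ hv))) hnot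
  · refine absurd (fun v hv => (hK v).2 (Or.inr ?_)) hnot
    exact K.convex.neg.segment_subset h₀ (by simpa using h₁) hv
  · exact Or.inr ⟨h₀, h₁⟩

theorem exists_smul_mem_complexCone_of_realSeg_subset (hD : convexR D)
    (hK : ∀ v, v ∈ coneOver D ↔ v ∈ K ∨ -v ∈ K) {v₀ v₁ : RV n} (hv₀ : v₀ ≠ 0)
    (h : realSeg v₀ v₁ ⊆ D) {c₀ c₁ : ℂ} (hc : 0 ≤ (c₀ * conj c₁).re)
    (hne : c₀ • cplx v₀ + c₁ • cplx v₁ ≠ 0) :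
    ∃ c : ℂ, c ≠ 0 ∧ c • (c₀ • cplx v₀ + c₁ • cplx v₁) ∈ complexCone K := by
  rw [realSeg_subset_iff] at h
  rcases linearIndependent_pair_or_exists_smul (K := ℝ) hv₀ v₁ with hLI | ⟨r, rfl⟩
  · have hseg : segment ℝ v₀ v₁ ⊆ coneOver D := by
      rintro _ ⟨s, t, hs, ht, -, rfl⟩
      exact h s t (mul_nonneg hs ht)
    rcases mem_and_mem_or_of_segment_subset hD hK hLI hseg with ⟨h₀, h₁⟩ | ⟨h₀, h₁⟩
    · exact exists_smul_mem_complexCone h₀ h₁ hc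
    · obtain ⟨c, hc0, hmem⟩ := exists_smul_mem_complexCone h₀ h₁ hc
      refine ⟨-c, neg_ne_zero.2 hc0, ?_⟩
      simpa only [cplx_neg, smul_neg, ← neg_add, neg_smul] using hmem
  · have hsum : c₀ • cplx v₀ + c₁ • cplx (r • v₀) = (c₀ + c₁ * r) • cplx v₀ := by
      rw [cplx_smul, smul_smul, add_smul]
    rw [hsum] at hne ⊢
    have hc0 : c₀ + c₁ * r ≠ 0 := (smul_ne_zero_iff.1 hne).1
    rcases (hK v₀).1 (by simpa using h 1 0 (by simp)) with h₀ | h₀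
    · exact ⟨(c₀ + c₁ * r)⁻¹, inv_ne_zero hc0, by
        rw [inv_smul_smul₀ hc0]
        exact cplx_mem_complexCone h₀⟩
    · refine ⟨-(c₀ + c₁ * r)⁻¹, neg_ne_zero.2 (inv_ne_zero hc0), ?_⟩
      rw [neg_smul, inv_smul_smul₀ hc0, ← cplx_neg]
      exact cplx_mem_complexCone h₀

theorem eTube_eq_projImage (hD : convexR D) (hK : ∀ v, v ∈ coneOver D ↔ v ∈ K ∨ -v ∈ K) :
    eTube D = projImage ℂ (complexCone K : Set (CV n)) := by
  ext z
  constructor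
  · intro hz
    simp only [eTube, mem_iUnion] at hz
    obtain ⟨v₀, v₁, hv₀, -, h, c₀, c₁, hc, hne, rfl⟩ := hz
    exact (mk_mem_projImage_iff hne).2
      (exists_smul_mem_complexCone_of_realSeg_subset hD hK hv₀ h hc hne)
  · induction z using Projectivization.ind with | h w hw0 => ?_
    rw [mk_mem_projImage_iff]
    rintro ⟨c, hc, hw⟩
    rw [← (Projectivization.mk_eq_mk_iff' ..).2 ⟨c, rfl⟩]
    exact mk_mem_eTube_of_mem_complexCone hK (smul_ne_zero hc hw0) hw

end Tube

/-- If `D ⊆ ℝℙⁿ` is a compact convex set, then its elliptic tube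
`D^e ⊆ ℂℙⁿ` is ℂ-convex. -/
theorem eTube_cConvex_of_compact_convex
    (n : ℕ) (D : Set (RP n)) (hDc : IsCompact D) (hDconv : convexR D) :
    cConvex (eTube D) := by
  obtain ⟨K, hKsal, hK⟩ :=
    (isProjConvexCone_coneOver hDconv).exists_properCone (isClosed_coneOver hDc.isClosed)
  obtain ⟨ℓ, c, hc, hℓ⟩ := exists_mul_norm_le_of_salient hKsal
  have hpos : ∀ v ∈ K, v ≠ 0 → ℓ v ≠ 0 := fun v hv hv0 =>
    (apply_pos_of_mul_norm_le hc hv0 (hℓ v hv)).ne'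
  have hne : ∀ w ∈ complexCone K, w ≠ 0 → complexify ℓ w ≠ 0 := fun w =>
    complexify_ne_zero_of_mem_complexCone hpos
  rw [eTube_eq_projImage hDconv hK]
  refine ⟨?_, ?_⟩
  · rintro _ ⟨W, hW, rfl⟩
    exact not_setOf_rep_mem_subset_projImage (ℓ := (complexify ℓ).toLinearMap) hne (by omega)
  · rintro _ ⟨W, -, rfl⟩
    have hcontr := contractibleSpace_projImage_inter (salient_complexCone hKsal) hne W
    refine ⟨?_, fun h => have := hcontr h; inferInstance⟩
    rcases eq_empty_or_nonempty (projImage ℂ (complexCone K : Set (CV n)) ∩ {z | z.rep ∈ W})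
      with h | h
    · exact h ▸ isPreconnected_empty
    · have := hcontr h
      exact isPreconnected_iff_preconnectedSpace.2 inferInstance
end
end

section
/- Let Ω ⊆ ℝℙⁿ be an open properly convex set and let Γ be a subgroup of GL(n+1, ℝ) whose induced projective action on ℝℙⁿ preserves Ω and is free on Ω (every γ ∈ Γ fixing some point of Ω is a scalar matrix) and properly discontinuous on Ω (for every compact K ⊆ Ω, the set of classes modulo scalars of elements γ ∈ Γ with γ·K ∩ K ≠ ∅ is finite). Then the induced projective action of Γ (viewed inside GL(n+1, ℂ)) on ℂℙⁿ preserves the elliptic tube Ω^e, and it is free and properly discontinuous on Ω^e in the same sense. -/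
open scoped ComplexConjugate

noncomputable section

/-- Projective hyperplanes in real projective space. -/
def isHypR {n : ℕ} (H : Set (RP n)) : Prop :=
  ∃ ξ : Module.Dual ℝ (RV n), ξ ≠ 0 ∧ H = {x | ξ x.rep = 0}

/-- Proper convexity: convex, not contained in a projective hyperplane, and containing
no affine line (projective line with one point removed). -/
def properlyConvexR {n : ℕ} (D : Set (RP n)) : Prop :=
  convexR D ∧ (∀ H, isHypR H → ¬ D ⊆ H) ∧
    ∀ L, isLineR L → ∀ p ∈ L, ¬ (L \ {p}) ⊆ D

/-- The projective action of `GL(n+1,ℝ)` on real projective space. -/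
def actR {n : ℕ} (g : Matrix.GeneralLinearGroup (Fin (n + 1)) ℝ) (x : RP n) : RP n :=
  Projectivization.mk ℝ ((g : Matrix (Fin (n + 1)) (Fin (n + 1)) ℝ).mulVec x.rep)
    (by
      intro h0
      have h1 : ((↑g⁻¹ : Matrix (Fin (n + 1)) (Fin (n + 1)) ℝ) *
          (↑g : Matrix (Fin (n + 1)) (Fin (n + 1)) ℝ)).mulVec x.rep = 0 := by
        rw [← Matrix.mulVec_mulVec, h0, Matrix.mulVec_zero]
      rw [Units.inv_mul, Matrix.one_mulVec] at h1
      exact x.rep_nonzero h1)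

/-- Complexification of a real matrix. -/
def cMat {n : ℕ} (m : Matrix (Fin (n + 1)) (Fin (n + 1)) ℝ) :
    Matrix (Fin (n + 1)) (Fin (n + 1)) ℂ :=
  m.map (algebraMap ℝ ℂ)

/-- The projective action of the real group `GL(n+1,ℝ) ⊆ GL(n+1,ℂ)` on complex projective
space. -/
def actC {n : ℕ} (g : Matrix.GeneralLinearGroup (Fin (n + 1)) ℝ) (z : CP n) : CP n :=
  Projectivization.mk ℂ ((cMat (↑g : Matrix (Fin (n + 1)) (Fin (n + 1)) ℝ)).mulVec z.rep)
    (by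
      intro h0
      have h1 : (cMat (↑g⁻¹ : Matrix (Fin (n + 1)) (Fin (n + 1)) ℝ) *
          cMat (↑g : Matrix (Fin (n + 1)) (Fin (n + 1)) ℝ)).mulVec z.rep = 0 := by
        rw [← Matrix.mulVec_mulVec, h0, Matrix.mulVec_zero]
      rw [cMat, cMat, ← Matrix.map_mul, Units.inv_mul] at h1
      simp only [Matrix.map_one (algebraMap ℝ ℂ) (map_zero _) (map_one _),
        Matrix.one_mulVec] at h1
      exact z.rep_nonzero h1)

/-!
The cone over `Ω` in `ℝⁿ⁺¹` is `C ∪ -C` for an open convex cone `C`, unique up to sign. For a point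
`[v]` of `ℂℙⁿ` the complex numbers `c` with `Re (c v) ∈ C` form an open convex planar cone, which is
nonempty when `[v]` lies in the elliptic tube. Its first moment `b` in the unit disc lies in it, so
`Re (b v) ∈ C`. Multiplying `v` by a complex number rotates the planar cone, which multiplies
`Re (b v)` by a positive factor only, and replacing `C` by `-C` changes its sign; hence
`[v] ↦ [Re (b v)]` is a well-defined continuous `Γ`-equivariant map from a neighbourhood of the tube
to `Ω`. Such a map carries fixed points to fixed points and returns of a compact set to returns of
its compact image, so freeness and proper discontinuity pull back from `Ω`.
-/

section VectorLift

variable {K V : Type*} [DivisionRing K] [AddCommGroup V] [Module K V]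
  {D : Set (Projectivization K V)} {v : V}

/-- The set of nonzero vectors representing the points of `D`. -/
def vectorLift (D : Set (Projectivization K V)) : Set V :=
  Subtype.val '' (Projectivization.mk' K ⁻¹' D)

lemma mk_mem_iff_mem_vectorLift (h : v ≠ 0) :
    Projectivization.mk K v h ∈ D ↔ v ∈ vectorLift D :=
  ⟨fun hv => ⟨⟨v, h⟩, hv, rfl⟩, by rintro ⟨w, hw, rfl⟩; exact hw⟩

lemma rep_mem_vectorLift {p : Projectivization K V} : p.rep ∈ vectorLift D ↔ p ∈ D := by
  rw [← mk_mem_iff_mem_vectorLift p.rep_nonzero, p.mk_rep]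

lemma ne_zero_of_mem_vectorLift (hv : v ∈ vectorLift D) : v ≠ 0 := by
  obtain ⟨w, -, rfl⟩ := hv
  exact w.2

lemma mem_vectorLift_of_smul_mem {c : K} (h : c • v ∈ vectorLift D) : v ∈ vectorLift D := by
  have hcv := ne_zero_of_mem_vectorLift h
  have hv := right_ne_zero_of_smul hcv
  rw [← mk_mem_iff_mem_vectorLift hcv] at h
  rwa [← mk_mem_iff_mem_vectorLift hv, ← (Projectivization.mk_eq_mk_iff' K _ _ hcv hv).2 ⟨c, rfl⟩]

lemma smul_mem_vectorLift_iff {c : K} (hc : c ≠ 0) : c • v ∈ vectorLift D ↔ v ∈ vectorLift D :=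
  ⟨mem_vectorLift_of_smul_mem, fun hv =>
    mem_vectorLift_of_smul_mem (c := c⁻¹) (by rwa [inv_smul_smul₀ hc])⟩

lemma neg_mem_vectorLift_iff : -v ∈ vectorLift D ↔ v ∈ vectorLift D := by
  rw [← neg_one_smul K v, smul_mem_vectorLift_iff (neg_ne_zero.2 one_ne_zero)]

variable [TopologicalSpace V]

lemma isQuotientMap_projectivization_mk' :
    Topology.IsQuotientMap (Projectivization.mk' K : {v : V // v ≠ 0} → Projectivization K V) :=
  isQuotientMap_quotient_mk'

lemma isOpen_vectorLift [T1Space V] (hD : IsOpen D) : IsOpen (vectorLift D) :=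
  isOpen_ne.isOpenMap_subtype_val _ (hD.preimage isQuotientMap_projectivization_mk'.continuous)

lemma continuous_comp_rep {X : Type*} [TopologicalSpace X] {h : V → X}
    (hc : ContinuousOn h {0}ᶜ) (hs : ∀ (c : Kˣ) (v : V), h (c • v) = h v) :
    Continuous fun p : Projectivization K V => h p.rep := by
  refine isQuotientMap_projectivization_mk'.continuous_iff.2 ?_
  convert! continuousOn_iff_continuous_domRestrict.1 hc using 1
  funext v
  obtain ⟨c, hc⟩ := Projectivization.exists_smul_eq_mk_rep K v.1 v.2
  exact (congrArg h hc.symm).trans (hs c v)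

end VectorLift

section Dichotomy

lemma isLineR_span_pair {n : ℕ} {x y : RV n} (h : LinearIndependent ℝ ![x, y]) :
    isLineR {p : RP n | p.rep ∈ Submodule.span ℝ {x, y}} := by
  refine ⟨_, ?_, rfl⟩
  have := finrank_span_eq_card h
  rwa [Matrix.range_cons_cons_empty, Fintype.card_fin] at this

lemma rep_mk_mem_iff {K V : Type*} [DivisionRing K] [AddCommGroup V] [Module K V]
    (W : Submodule K V) {v : V} (h : v ≠ 0) : (Projectivization.mk K v h).rep ∈ W ↔ v ∈ W := by
  obtain ⟨a, ha⟩ := Projectivization.exists_smul_eq_mk_rep K v h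
  rw [← ha, Units.smul_def, W.smul_mem_iff a.ne_zero]

lemma exists_dual_of_not_segment_subset {V : Type*} [AddCommGroup V] [Module ℝ V]
    {D : Set (Projectivization ℝ V)} {x y : V} (hx : x ∈ vectorLift D) (hy : y ∈ vectorLift D)
    (h : ¬ segment ℝ x y ⊆ vectorLift D) :
    ∃ f : Module.Dual ℝ V, 0 < f x ∧ f y < 0 ∧
      ∀ v ∈ Submodule.span ℝ {x, y}, f v = 0 → v ∉ vectorLift D := by
  obtain ⟨_, ⟨a, b, ha, hb, hab, rfl⟩, hp⟩ := Set.not_subset.1 h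
  have ha : 0 < a := ha.lt_of_ne' fun h0 => hp (by simpa [h0, show b = 1 by linarith] using hy)
  have hb : 0 < b := hb.lt_of_ne' fun h0 => hp (by simpa [h0, show a = 1 by linarith] using hx)
  have hxp : x ∉ Submodule.span ℝ {a • x + b • y} := fun hmem => by
    obtain ⟨c, hc⟩ := Submodule.mem_span_singleton.1 hmem
    exact hp (mem_vectorLift_of_smul_mem (hc ▸ hx))
  obtain ⟨g, hgx, hg⟩ := Submodule.exists_le_ker_of_notMem hxp
  obtain ⟨f, hfx, hfp⟩ : ∃ f : Module.Dual ℝ V, f x = 1 ∧ f (a • x + b • y) = 0 :=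
    ⟨(g x)⁻¹ • g, inv_mul_cancel₀ hgx, by
      rw [LinearMap.smul_apply, hg (Submodule.mem_span_singleton_self _), smul_zero]⟩
  have hfy : a + b * f y = 0 := by simpa [hfx] using hfp
  refine ⟨f, by linarith, by nlinarith, fun v hv hfv hvL => hp ?_⟩
  obtain ⟨s, t, rfl⟩ := Submodule.mem_span_pair.1 hv
  have hst : s + t * f y = 0 := by simpa [hfx] using hfv
  have hs : b * s = t * a := by linear_combination b * hst - t * hfy
  have hv_smul : t • (a • x + b • y) = b • (s • x + t • y) := by
    rw [smul_add, smul_add, smul_smul, smul_smul, smul_smul, smul_smul, hs, mul_comm t b]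
  refine mem_vectorLift_of_smul_mem (c := t) ?_
  rwa [hv_smul, smul_mem_vectorLift_iff hb.ne']

variable {n : ℕ} {D : Set (RP n)} {x y : RV n}

lemma exists_quadraticForm_eq_zero (hD : convexR D) {Q : QuadraticForm ℝ (RV n)}
    (hQ : Continuous Q) (hx : x ∈ vectorLift D) (hy : y ∈ vectorLift D)
    (hQx : 0 < Q x) (hQy : Q y < 0) :
    ∃ v ∈ Submodule.span ℝ {x, y}, v ∈ vectorLift D ∧ Q v = 0 := by
  have hx0 := ne_zero_of_mem_vectorLift hx
  have hy0 := ne_zero_of_mem_vectorLift hy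
  have hxy : LinearIndependent ℝ ![x, y] := (LinearIndependent.pair_iff' hx0).2 <| by
    rintro c rfl
    rw [Q.map_smul, smul_eq_mul] at hQy
    nlinarith [mul_self_nonneg c]
  let q : RV n → ℝ := fun v => Q v / ‖v‖ ^ 2
  have hq_smul (c : ℝˣ) (v : RV n) : q (c • v) = q v := by
    simp only [q, Units.smul_def, Q.map_smul, norm_smul, smul_eq_mul, mul_pow, Real.norm_eq_abs,
      sq_abs]
    rw [← sq, mul_div_mul_left _ _ (pow_ne_zero 2 c.ne_zero)]
  have hq_rep {v : RV n} (hv : v ≠ 0) : q (Projectivization.mk ℝ v hv).rep = q v := by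
    obtain ⟨c, hc⟩ := Projectivization.exists_smul_eq_mk_rep ℝ v hv
    rw [← hc, hq_smul]
  have hq : Continuous fun p : RP n => q p.rep :=
    continuous_comp_rep (hQ.continuousOn.div (by fun_prop) fun v hv =>
      pow_ne_zero 2 (norm_ne_zero_iff.2 hv)) hq_smul
  have hmem {v : RV n} (hv0 : v ≠ 0) (hv : v ∈ vectorLift D) (hvs : v ∈ Submodule.span ℝ {x, y}) :
      Projectivization.mk ℝ v hv0 ∈ D ∩ {p | p.rep ∈ Submodule.span ℝ {x, y}} :=
    ⟨(mk_mem_iff_mem_vectorLift hv0).2 hv, (rep_mk_mem_iff _ hv0).2 hvs⟩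
  obtain ⟨p, ⟨hpD, hps⟩, hp⟩ := (hD.2 _ (isLineR_span_pair hxy)).intermediate_value
    (hmem hy0 hy (Submodule.mem_span_of_mem (by simp)))
    (hmem hx0 hx (Submodule.mem_span_of_mem (by simp))) hq.continuousOn
    (show (0 : ℝ) ∈ Set.Icc _ _ by
      rw [hq_rep, hq_rep]
      exact ⟨div_nonpos_of_nonpos_of_nonneg hQy.le (by positivity), by positivity⟩)
  refine ⟨p.rep, hps, rep_mem_vectorLift.2 hpD, ?_⟩
  exact (div_eq_zero_iff.1 hp).resolve_right (pow_ne_zero 2 (norm_ne_zero_iff.2 p.rep_nonzero))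

-- If both `[x, y]` and `[x, -y]` leave the cone, the product of two functionals that vanish where
-- they leave it changes sign on the cone over `D ∩ ℓ`, `ℓ` the line through `x` and `y`. A
-- quadratic form has a well-defined sign on `ℓ`, so it vanishes somewhere on the connected `D ∩ ℓ`.
lemma segment_subset_or_segment_neg_subset (hD : convexR D) (hx : x ∈ vectorLift D)
    (hy : y ∈ vectorLift D) :
    segment ℝ x y ⊆ vectorLift D ∨ segment ℝ x (-y) ⊆ vectorLift D := by
  by_contra! h
  obtain ⟨f, hfx, hfy, hf⟩ := exists_dual_of_not_segment_subset hx hy h.1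
  obtain ⟨g, hgx, hgy, hg⟩ :=
    exists_dual_of_not_segment_subset hx (neg_mem_vectorLift_iff.2 hy) h.2
  rw [map_neg, neg_lt_zero] at hgy
  have hcont : Continuous (QuadraticMap.linMulLin f g) :=
    f.continuous_of_finiteDimensional.mul g.continuous_of_finiteDimensional
  obtain ⟨v, hv, hvL, hfg⟩ := exists_quadraticForm_eq_zero hD hcont hx hy (mul_pos hfx hgx)
    (mul_neg_of_neg_of_pos hfy hgy)
  have hv' : v ∈ Submodule.span ℝ {x, -y} := by
    obtain ⟨a, b, rfl⟩ := Submodule.mem_span_pair.1 hv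
    exact Submodule.mem_span_pair.2 ⟨a, -b, by rw [neg_smul_neg]⟩
  exact (mul_eq_zero.1 hfg).elim (fun h0 => hf v hv h0 hvL) fun h0 => hg v hv' h0 hvL

lemma smul_add_smul_mem_of_segment_subset (h : segment ℝ x y ⊆ vectorLift D) {a b : ℝ}
    (ha : 0 ≤ a) (hb : 0 ≤ b) (hab : 0 < a + b) : a • x + b • y ∈ vectorLift D := by
  have := h ⟨a / (a + b), b / (a + b), by positivity, by positivity, by field_simp, rfl⟩
  rw [div_eq_inv_mul, div_eq_inv_mul, mul_smul, mul_smul, ← smul_add] at this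
  exact mem_vectorLift_of_smul_mem this

lemma not_segment_neg_subset (hD : convexR D) (h : segment ℝ x y ⊆ vectorLift D) :
    ¬ segment ℝ x (-y) ⊆ vectorLift D := by
  intro h'
  have mem_of_nonneg {a b : ℝ} (ha : 0 ≤ a) (hab : a ≠ 0 ∨ b ≠ 0) :
      a • x + b • y ∈ vectorLift D := by
    rcases le_total 0 b with hb | hb
    · exact smul_add_smul_mem_of_segment_subset h ha hb (by grind)
    · simpa using smul_add_smul_mem_of_segment_subset h' ha (neg_nonneg.2 hb) (by grind)
  have mem {a b : ℝ} (hab : a ≠ 0 ∨ b ≠ 0) : a • x + b • y ∈ vectorLift D := by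
    rcases le_total 0 a with ha | ha
    · exact mem_of_nonneg ha hab
    · rw [← neg_mem_vectorLift_iff, neg_add, ← neg_smul, ← neg_smul]
      exact mem_of_nonneg (neg_nonneg.2 ha) (by simpa using hab)
  have hxy : LinearIndependent ℝ ![x, y] := LinearIndependent.pair_iff.2 fun a b h0 => by
    by_contra! hab
    exact ne_zero_of_mem_vectorLift (mem (by grind)) h0
  refine hD.1 _ (isLineR_span_pair hxy) fun p hp => ?_
  obtain ⟨a, b, hab⟩ := Submodule.mem_span_pair.1 hp
  rw [← rep_mem_vectorLift, ← hab]
  refine mem ?_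
  by_contra! h0
  exact p.rep_nonzero (by simp [← hab, h0])

end Dichotomy

section ConeLift

/-- The points of `L` seen from `x` without leaving `L`. For `L` the set of vectors over a convex
set of the projective space, it is the half of `L` containing `x`. -/
def visibleSet {V : Type*} [AddCommGroup V] [Module ℝ V] (L : Set V) (x : V) : Set V :=
  {y | segment ℝ x y ⊆ L}

lemma mem_visibleSet_comm {V : Type*} [AddCommGroup V] [Module ℝ V] {L : Set V} {x y : V} :
    y ∈ visibleSet L x ↔ x ∈ visibleSet L y := by
  rw [visibleSet, visibleSet, Set.mem_ofPred_eq, Set.mem_ofPred_eq, segment_symm]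

lemma isOpen_visibleSet {V : Type*} [AddCommGroup V] [Module ℝ V] [TopologicalSpace V]
    [ContinuousAdd V] [ContinuousSMul ℝ V] {L : Set V} (hL : IsOpen L) (x : V) :
    IsOpen (visibleSet L x) := by
  simp only [visibleSet, segment_eq_image, Set.image_subset_iff]
  refine isOpen_iff_mem_nhds.2 fun y hy => ?_
  refine isCompact_Icc.eventually_forall_of_forall_eventually fun t ht => ?_
  have hc : Continuous fun q : V × ℝ => (1 - q.2) • x + q.2 • q.1 := by fun_prop
  exact (hL.preimage hc).mem_nhds (hy ht)

variable {n : ℕ} {D : Set (RP n)} {x y z : RV n}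

lemma vectorLift_eq_visibleSet_union_neg (hD : convexR D) (hx : x ∈ vectorLift D) :
    vectorLift D = visibleSet (vectorLift D) x ∪ -visibleSet (vectorLift D) x := by
  ext y
  refine ⟨segment_subset_or_segment_neg_subset hD hx, ?_⟩
  rintro (hy | hy)
  · exact hy (right_mem_segment ℝ x y)
  · exact neg_mem_vectorLift_iff.1 (hy (right_mem_segment ℝ x (-y)))

lemma segment_subset_visibleSet (hDo : IsOpen D) (hD : convexR D)
    (hy : y ∈ visibleSet (vectorLift D) x) (hyz : segment ℝ y z ⊆ vectorLift D) :
    segment ℝ y z ⊆ visibleSet (vectorLift D) x := by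
  have hx : x ∈ vectorLift D := hy (left_mem_segment ℝ x y)
  have ho := isOpen_visibleSet (isOpen_vectorLift hDo) x
  refine (convex_segment y z).isPreconnected.subset_left_of_subset_union ho ho.neg ?_ ?_
    ⟨y, left_mem_segment ℝ y z, hy⟩
  · exact Set.disjoint_left.2 fun w hw hw' => not_segment_neg_subset hD hw hw'
  · rwa [← vectorLift_eq_visibleSet_union_neg hD hx]

lemma convex_visibleSet (hDo : IsOpen D) (hD : convexR D) (x : RV n) :
    Convex ℝ (visibleSet (vectorLift D) x) := by
  refine convex_iff_segment_subset.2 fun y hy z hz => ?_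
  have hxz : x ∈ visibleSet (vectorLift D) z := mem_visibleSet_comm.1 hz
  have hyz : y ∈ visibleSet (vectorLift D) z :=
    segment_subset_visibleSet hDo hD hxz hy (right_mem_segment ℝ x y)
  exact segment_subset_visibleSet hDo hD hy (segment_symm ℝ z y ▸ hyz)

/-- `C` is one of the two open convex cones projecting onto the set `D`. -/
structure IsConeLift {V : Type*} [AddCommGroup V] [Module ℝ V] [TopologicalSpace V]
    (D : Set (Projectivization ℝ V)) (C : Set V) : Prop where
  isOpen : IsOpen C
  convex : Convex ℝ C
  vectorLift_eq : vectorLift D = C ∪ -C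

theorem exists_isConeLift (hDo : IsOpen D) (hD : convexR D) : ∃ C, IsConeLift D C := by
  rcases D.eq_empty_or_nonempty with rfl | ⟨p, hp⟩
  · exact ⟨∅, isOpen_empty, convex_empty, by simp [vectorLift]⟩
  · exact ⟨visibleSet (vectorLift D) p.rep, isOpen_visibleSet (isOpen_vectorLift hDo) _,
      convex_visibleSet hDo hD _,
      vectorLift_eq_visibleSet_union_neg hD (rep_mem_vectorLift.2 hp)⟩

namespace IsConeLift

variable {V : Type*} [AddCommGroup V] [Module ℝ V] [TopologicalSpace V]
  {D : Set (Projectivization ℝ V)} {C C' : Set V} {v : V}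

lemma subset_vectorLift (hC : IsConeLift D C) : C ⊆ vectorLift D :=
  hC.vectorLift_eq ▸ Set.subset_union_left

lemma disjoint_neg (hC : IsConeLift D C) : Disjoint C (-C) :=
  Set.disjoint_left.2 fun v hv hv' => ne_zero_of_mem_vectorLift
    (hC.subset_vectorLift (hC.convex.midpoint_mem hv hv')) (midpoint_self_neg ℝ v)

lemma preimage {W : Type*} [AddCommGroup W] [Module ℝ W] [TopologicalSpace W]
    {D' : Set (Projectivization ℝ W)} (hC : IsConeLift D C) (T : W →L[ℝ] V)
    (hT : T ⁻¹' vectorLift D = vectorLift D') : IsConeLift D' (T ⁻¹' C) :=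
  ⟨hC.isOpen.preimage T.continuous, hC.convex.linear_preimage T.toLinearMap, by
    rw [← hT, hC.vectorLift_eq, Set.preimage_union]
    congr 1
    ext v
    simp⟩

variable [IsTopologicalAddGroup V]

lemma neg (hC : IsConeLift D C) : IsConeLift D (-C) :=
  ⟨hC.isOpen.neg, hC.convex.neg, by rw [hC.vectorLift_eq, neg_neg, Set.union_comm]⟩

lemma subset_or_subset_neg (hC : IsConeLift D C) {S : Set V} (hS : IsPreconnected S)
    (hSD : S ⊆ vectorLift D) : S ⊆ C ∨ S ⊆ -C :=
  hS.subset_or_subset hC.isOpen hC.isOpen.neg hC.disjoint_neg (hC.vectorLift_eq ▸ hSD)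

variable [ContinuousSMul ℝ V]

lemma smul_mem (hC : IsConeLift D C) {c : ℝ} (hc : 0 < c) (hv : v ∈ C) : c • v ∈ C := by
  have hray : (fun t : ℝ => t • v) '' Set.Ioi 0 ⊆ vectorLift D := by
    rintro _ ⟨t, ht, rfl⟩
    exact (smul_mem_vectorLift_iff (ne_of_gt ht)).2 (hC.subset_vectorLift hv)
  have hmem {t : ℝ} (ht : 0 < t) : t • v ∈ (fun t : ℝ => t • v) '' Set.Ioi 0 := ⟨t, ht, rfl⟩
  have hconn : IsPreconnected ((fun t : ℝ => t • v) '' Set.Ioi 0) :=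
    isPreconnected_Ioi.image _ (by fun_prop)
  refine (hC.subset_or_subset_neg hconn hray).elim (fun h => h (hmem hc)) fun h => ?_
  exact (Set.disjoint_left.1 hC.disjoint_neg hv (one_smul ℝ v ▸ h (hmem one_pos))).elim

lemma smul_mem_iff (hC : IsConeLift D C) {c : ℝ} (hc : 0 < c) : c • v ∈ C ↔ v ∈ C :=
  ⟨fun h => inv_smul_smul₀ hc.ne' v ▸ hC.smul_mem (inv_pos.2 hc) h, hC.smul_mem hc⟩

lemma eq_or_eq_neg (hC : IsConeLift D C) (hC' : IsConeLift D C') : C' = C ∨ C' = -C := by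
  have eq_of_subset {A B : Set V} (hA : IsConeLift D A) (hB : IsConeLift D B) (h : A ⊆ B) :
      A = B := by
    refine h.antisymm fun v hv => ?_
    have : v ∈ A ∪ -A := hA.vectorLift_eq ▸ hB.subset_vectorLift hv
    exact this.resolve_right fun hv' =>
      Set.disjoint_left.1 hB.disjoint_neg hv (Set.neg_subset_neg.2 h hv')
  exact (hC.subset_or_subset_neg hC'.convex.isPreconnected hC'.subset_vectorLift).imp
    (eq_of_subset hC' hC) (eq_of_subset hC' hC.neg)

end IsConeLift

end ConeLift

section Barycenter

open MeasureTheory Metric Filter Topology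

/-- The first moment of the part of the cone `S` in the unit ball, that is, its barycenter up to a
positive factor: a choice of a ray in `S` that is equivariant under isometries. -/
def coneMoment {E : Type*} [NormedAddCommGroup E] [NormedSpace ℝ E] [MeasureSpace E]
    (S : Set E) : E :=
  ∫ x in S ∩ ball 0 1, x

variable {E : Type*} [NormedAddCommGroup E] [InnerProductSpace ℝ E] [FiniteDimensional ℝ E]
  [MeasurableSpace E] [BorelSpace E] {S : Set E}

lemma map_coneMoment (e : E ≃ₗᵢ[ℝ] E) (S : Set E) :
    e (coneMoment (e ⁻¹' S)) = coneMoment S := by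
  calc e (coneMoment (e ⁻¹' S)) = ∫ x in e ⁻¹' S ∩ ball 0 1, e x :=
        (e.toContinuousLinearEquiv.integral_comp_comm _).symm
    _ = ∫ x in e ⁻¹' (S ∩ ball 0 1), e x := by
        rw [Set.preimage_inter, e.preimage_ball, map_zero]
    _ = coneMoment S :=
        e.measurePreserving.setIntegral_preimage_emb e.toHomeomorph.measurableEmbedding id _

lemma coneMoment_neg (S : Set E) : coneMoment (-S) = -coneMoment S := by
  rw [← map_coneMoment (LinearIsometryEquiv.neg ℝ) S, LinearIsometryEquiv.coe_neg, neg_neg]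
  rfl

lemma nonpos_and_nonneg_of_forall_lt {V : Type*} [AddCommGroup V] [Module ℝ V] {S : Set V}
    (hne : S.Nonempty) (hsmul : ∀ c : ℝ, 0 < c → ∀ x ∈ S, c • x ∈ S) {f : Module.Dual ℝ V} {r : ℝ}
    (hf : ∀ x ∈ S, f x < r) : (∀ x ∈ S, f x ≤ 0) ∧ 0 ≤ r := by
  have hf' {c : ℝ} (hc : 0 < c) {x : V} (hx : x ∈ S) : c * f x < r := by
    simpa using hf _ (hsmul c hc x hx)
  have hnonpos : ∀ x ∈ S, f x ≤ 0 := fun x hx => by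
    by_contra! h
    have := hf' (c := (|r| + 1) / f x) (by positivity) hx
    rw [div_mul_cancel₀ _ h.ne'] at this
    linarith [le_abs_self r]
  refine ⟨hnonpos, ?_⟩
  obtain ⟨x, hx⟩ := hne
  have hlim : Tendsto (fun c : ℝ => c * f x) (𝓝[>] 0) (𝓝 0) :=
    tendsto_nhdsWithin_of_tendsto_nhds (Continuous.tendsto' (by fun_prop) _ _ (zero_mul _))
  exact le_of_tendsto hlim (eventually_mem_nhdsWithin.mono fun c hc => (hf' hc hx).le)

lemma integrableOn_inter_ball {F : Type*} [NormedAddCommGroup F] {g : E → F} (hg : Continuous g)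
    (S : Set E) : IntegrableOn g (S ∩ ball 0 1) :=
  (hg.continuousOn.integrableOn_compact (isCompact_closedBall 0 1)).mono_set
    (Set.inter_subset_right.trans ball_subset_closedBall)

lemma setIntegral_inter_ball_neg (hSo : IsOpen S) (hne : (S ∩ ball 0 1).Nonempty) {g : E → ℝ}
    (hg : Continuous g) (hneg : ∀ x ∈ S, g x < 0) : ∫ x in S ∩ ball 0 1, g x < 0 := by
  have hTo : IsOpen (S ∩ ball 0 1) := hSo.inter isOpen_ball
  have hsupp : S ∩ ball 0 1 ⊆ Function.support (-g) := fun x hx =>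
    neg_ne_zero.2 (hneg x hx.1).ne
  rw [← neg_pos, ← integral_neg]
  refine (setIntegral_pos_iff_support_of_nonneg_ae ?_ (integrableOn_inter_ball hg S).neg).2 ?_
  · filter_upwards [ae_restrict_mem hTo.measurableSet] with x hx
    exact neg_nonneg.2 (hneg x hx.1).le
  · rw [Set.inter_eq_right.2 hsupp]
    exact hTo.measure_pos volume hne

lemma coneMoment_mem (hSo : IsOpen S) (hS : Convex ℝ S) (hne : S.Nonempty)
    (hsmul : ∀ c : ℝ, 0 < c → ∀ x ∈ S, c • x ∈ S) : coneMoment S ∈ S := by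
  by_contra hb
  obtain ⟨f, hf⟩ := geometric_hahn_banach_open_point hS hSo hb
  obtain ⟨hfS, hfb⟩ := nonpos_and_nonneg_of_forall_lt hne hsmul (f := f.toLinearMap) hf
  have hfint : f (coneMoment S) = ∫ x in S ∩ ball 0 1, f x :=
    (f.integral_comp_comm (integrableOn_inter_ball continuous_id S)).symm
  have hle : f (coneMoment S) ≤ 0 :=
    hfint ▸ setIntegral_nonpos (hSo.inter isOpen_ball).measurableSet fun x hx => hfS x hx.1
  have hneS : (S ∩ ball 0 1).Nonempty := by
    obtain ⟨x, hx⟩ := hne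
    refine ⟨(‖x‖ + 1)⁻¹ • x, hsmul _ (by positivity) x hx, ?_⟩
    rw [mem_ball_zero_iff, norm_smul, norm_inv, Real.norm_of_nonneg (by positivity),
      inv_mul_lt_one₀ (by positivity)]
    exact lt_add_one _
  have hlt := setIntegral_inter_ball_neg hSo hneS f.continuous fun x hx => (hf x hx).trans_le hle
  exact hlt.not_ge (hfint ▸ hfb)

lemma preimage_closure_subset_closure_preimage {E F : Type*} [AddCommGroup E] [Module ℝ E]
    [TopologicalSpace E] [IsTopologicalAddGroup E] [ContinuousSMul ℝ E] [AddCommGroup F]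
    [Module ℝ F] [TopologicalSpace F] [IsTopologicalAddGroup F] [ContinuousSMul ℝ F] {C : Set F}
    (hCo : IsOpen C) (hC : Convex ℝ C) {A : E →ₗ[ℝ] F} (hne : (A ⁻¹' C).Nonempty) :
    A ⁻¹' closure C ⊆ closure (A ⁻¹' C) := by
  obtain ⟨e₀, he₀⟩ := hne
  intro e he
  have hseg : openSegment ℝ e₀ e ⊆ A ⁻¹' C := by
    have himage : A '' openSegment ℝ e₀ e = openSegment ℝ (A e₀) (A e) :=
      image_openSegment ℝ A.toAffineMap e₀ e
    rw [← Set.image_subset_iff, himage]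
    have := hC.openSegment_interior_closure_subset_interior (x := A e₀) (y := A e)
    rw [hCo.interior_eq] at this
    exact this he₀ he
  exact closure_mono hseg (segment_subset_closure_openSegment (right_mem_segment ℝ e₀ e))

lemma continuousAt_coneMoment_preimage {X F : Type*} [TopologicalSpace X]
    [FirstCountableTopology X] [NormedAddCommGroup F] [NormedSpace ℝ F] {C : Set F}
    (hCo : IsOpen C) (hC : Convex ℝ C) {A : X → E →L[ℝ] F} {x₀ : X}
    (hA : ∀ e, ContinuousAt (fun x => A x e) x₀) (hne : (A x₀ ⁻¹' C).Nonempty) :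
    ContinuousAt (fun x => coneMoment (A x ⁻¹' C)) x₀ := by
  have hopen (x : X) : IsOpen (A x ⁻¹' C) := hCo.preimage (A x).continuous
  have hind : (fun x => coneMoment (A x ⁻¹' C)) =
      fun x => ∫ e in ball 0 1, (A x ⁻¹' C).indicator id e := by
    funext x
    rw [setIntegral_indicator (hopen x).measurableSet, Set.inter_comm]
    rfl
  rw [hind]
  refine continuousAt_of_dominated (bound := fun e => ‖e‖)
    (.of_forall fun x => aestronglyMeasurable_id.indicator (hopen x).measurableSet)
    (.of_forall fun x => .of_forall fun e => norm_indicator_le_norm_self id e)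
    (by simpa only [Set.univ_inter] using! integrableOn_inter_ball continuous_norm Set.univ) ?_
  have hfr : volume (frontier (A x₀ ⁻¹' C)) = 0 :=
    (hC.linear_preimage (A x₀).toLinearMap).addHaar_frontier volume
  filter_upwards [ae_restrict_of_ae (measure_eq_zero_iff_ae_notMem.1 hfr)] with e he
  by_cases hmem : A x₀ e ∈ C
  · refine continuousAt_const.congr (f := fun _ => e) ?_
    filter_upwards [(hA e).eventually (hCo.mem_nhds hmem)] with x hx
    exact (Set.indicator_of_mem (s := A x ⁻¹' C) hx id).symm
  · have hcl : A x₀ e ∉ closure C := fun h => he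
      ⟨preimage_closure_subset_closure_preimage hCo hC (A := (A x₀).toLinearMap) hne h,
        fun hi => hmem (interior_subset (s := A x₀ ⁻¹' C) hi)⟩
    refine continuousAt_const.congr (f := fun _ => 0) ?_
    filter_upwards [(hA e).eventually (isClosed_closure.isOpen_compl.mem_nhds hcl)] with x hx
    exact (Set.indicator_of_notMem (s := A x ⁻¹' C) (fun h => hx (subset_closure h)) id).symm

end Barycenter

section Trace

variable {n : ℕ}

/-- The real parts of the complex multiples of `v`, as the real-linear map `c ↦ Re (c • v)`. -/
def rePart (v : CV n) : ℂ →L[ℝ] RV n :=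
  .pi fun i => Complex.reCLM ∘L ContinuousLinearMap.mul ℝ ℂ (v i)

lemma rePart_apply (v : CV n) (c : ℂ) (i : Fin (n + 1)) : rePart v c i = (v i * c).re := rfl

lemma rePart_smul (a c : ℂ) (v : CV n) : rePart (a • v) c = rePart v (a * c) := by
  ext i
  rw [rePart_apply, rePart_apply, Pi.smul_apply, smul_eq_mul, mul_assoc, mul_left_comm]

lemma continuous_rePart_apply (c : ℂ) : Continuous fun v : CV n => rePart v c :=
  continuous_pi fun i => Complex.continuous_re.comp ((continuous_apply i).mul continuous_const)

lemma rePart_cMat_mulVec (M : Matrix (Fin (n + 1)) (Fin (n + 1)) ℝ) (v : CV n) (c : ℂ) :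
    rePart ((cMat M).mulVec v) c = M.mulVec (rePart v c) := by
  ext i
  simp [rePart_apply, Matrix.mulVec, dotProduct, cMat, Finset.sum_mul, mul_assoc]

/-- The complex points whose conjugation-invariant line (or point) meets `D`: those represented by
a vector with real part over `D`. -/
def traceDomain (D : Set (RP n)) : Set (CP n) :=
  {z | ∃ c, rePart z.rep c ∈ vectorLift D}

variable {D : Set (RP n)} {C : Set (RV n)} {v : CV n}

lemma mk_mem_traceDomain_iff (hv : v ≠ 0) :
    Projectivization.mk ℂ v hv ∈ traceDomain D ↔ ∃ c, rePart v c ∈ vectorLift D := by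
  obtain ⟨a, ha⟩ := Projectivization.exists_smul_eq_mk_rep ℂ v hv
  have hcomp (c : ℂ) : rePart (Projectivization.mk ℂ v hv).rep c = rePart v (a * c) := by
    rw [← ha, Units.smul_def, rePart_smul]
  simp only [traceDomain, Set.mem_ofPred_eq, hcomp]
  exact (a.mulLeft.surjective.exists (p := fun c => rePart v c ∈ vectorLift D)).symm

lemma isOpen_traceDomain (hD : IsOpen D) : IsOpen (traceDomain D) := by
  have hpre : Projectivization.mk' ℂ ⁻¹' traceDomain D =
      ⋃ c, {v : {v : CV n // v ≠ 0} | rePart v.1 c ∈ vectorLift D} := by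
    ext v
    simpa using mk_mem_traceDomain_iff v.2
  refine isQuotientMap_projectivization_mk'.isOpen_preimage.1 ?_
  rw [hpre]
  exact isOpen_iUnion fun c => (isOpen_vectorLift hD).preimage
    ((continuous_rePart_apply c).comp continuous_subtype_val)

lemma rePart_smul_cplx_add_smul_cplx (c₀ c₁ d : ℂ) (v₀ v₁ : RV n) :
    rePart (c₀ • cplx v₀ + c₁ • cplx v₁) d = (c₀ * d).re • v₀ + (c₁ * d).re • v₁ := by
  ext i
  simp only [rePart_apply, cplx, Pi.add_apply, Pi.smul_apply, smul_eq_mul]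
  rw [← Complex.re_mul_ofReal, ← Complex.re_mul_ofReal, ← Complex.add_re]
  ring_nf

lemma exists_re_mul_combination_ne_zero {c₀ c₁ : ℂ} {v₀ v₁ : RV n}
    (h : c₀ • cplx v₀ + c₁ • cplx v₁ ≠ 0) :
    ∃ d, (d = conj c₀ ∨ d = conj c₁) ∧ (c₀ * d).re • v₀ + (c₁ * d).re • v₁ ≠ 0 := by
  by_contra! hzero
  refine h (funext fun i => Complex.normSq_eq_zero.1 ?_)
  have h₀ := congrFun (hzero _ (.inl rfl)) i
  have h₁ := congrFun (hzero _ (.inr rfl)) i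
  simp only [Complex.mul_re, Complex.conj_re, Complex.conj_im, mul_neg, sub_neg_eq_add,
    Pi.add_apply, Pi.smul_apply, smul_eq_mul, Pi.zero_apply, cplx, Complex.normSq_apply,
    Complex.add_re, Complex.ofReal_re, Complex.ofReal_im, mul_zero, sub_zero, Complex.add_im,
    Complex.mul_im, zero_add] at h₀ h₁ ⊢
  linear_combination v₀ i * h₀ + v₁ i * h₁

lemma eTube_subset_traceDomain (D : Set (RP n)) : eTube D ⊆ traceDomain D := by
  intro z hz
  simp only [eTube, Set.mem_iUnion] at hz
  obtain ⟨v₀, v₁, -, -, hseg, c₀, c₁, hc, h, rfl⟩ := hz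
  obtain ⟨d, hd, hne⟩ := exists_re_mul_combination_ne_zero h
  have hsign : 0 ≤ (c₀ * d).re * (c₁ * d).re := by
    have hc' : 0 ≤ (c₁ * conj c₀).re := by
      rwa [← Complex.conj_re, map_mul, Complex.conj_conj, mul_comm]
    rcases hd with rfl | rfl
    · rw [Complex.mul_conj]
      exact mul_nonneg (Complex.normSq_nonneg _) hc'
    · rw [Complex.mul_conj]
      exact mul_nonneg hc (Complex.normSq_nonneg _)
  rw [mk_mem_traceDomain_iff]
  refine ⟨d, ?_⟩
  rw [rePart_smul_cplx_add_smul_cplx, ← mk_mem_iff_mem_vectorLift hne]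
  exact hseg ⟨_, _, hsign, hne, rfl⟩

/-- The real part of the multiple of `v` chosen by the moment of the planar cone
`{c | Re (c • v) ∈ C}`: it lies in `C`, and its ray depends only on the complex line of `v`. -/
def traceCenter (C : Set (RV n)) (v : CV n) : RV n :=
  rePart v (coneMoment (rePart v ⁻¹' C))

lemma traceCenter_mem (hC : IsConeLift D C) (h : ∃ c, rePart v c ∈ vectorLift D) :
    traceCenter C v ∈ C := by
  have hne : (rePart v ⁻¹' C).Nonempty := by
    obtain ⟨c, hc⟩ := h
    rw [hC.vectorLift_eq] at hc
    exact hc.elim (fun hc => ⟨c, hc⟩) fun hc => ⟨-c, by simpa using hc⟩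
  exact coneMoment_mem (hC.isOpen.preimage (rePart v).continuous)
    (hC.convex.linear_preimage (rePart v).toLinearMap) hne fun t ht c hc => by
      rw [Set.mem_preimage, map_smul]
      exact hC.smul_mem ht hc

lemma traceCenter_neg (C : Set (RV n)) (v : CV n) : traceCenter (-C) v = -traceCenter C v := by
  have : rePart v ⁻¹' (-C) = -(rePart v ⁻¹' C) := by
    ext c
    simp
  rw [traceCenter, traceCenter, this, coneMoment_neg, map_neg]

lemma traceCenter_cMat_mulVec (C : Set (RV n)) (M : Matrix (Fin (n + 1)) (Fin (n + 1)) ℝ)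
    (v : CV n) :
    traceCenter C ((cMat M).mulVec v) = M.mulVec (traceCenter (M.mulVec ⁻¹' C) v) := by
  have : rePart ((cMat M).mulVec v) ⁻¹' C = rePart v ⁻¹' (M.mulVec ⁻¹' C) := by
    ext c
    rw [Set.mem_preimage, rePart_cMat_mulVec]
    rfl
  rw [traceCenter, rePart_cMat_mulVec, this, traceCenter]

lemma continuousAt_traceCenter (hC : IsConeLift D C) (h : ∃ c, rePart v c ∈ vectorLift D) :
    ContinuousAt (traceCenter C) v := by
  have hmoment : ContinuousAt (fun w => coneMoment (rePart w ⁻¹' C)) v :=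
    continuousAt_coneMoment_preimage hC.isOpen hC.convex
      (fun c => (continuous_rePart_apply c).continuousAt) ⟨_, traceCenter_mem hC h⟩
  exact continuousAt_pi.2 fun i =>
    Complex.continuous_re.continuousAt.comp ((continuous_apply i).continuousAt.mul hmoment)

lemma mul_eq_norm_smul_rotation (a d : ℂ) : a * d = ‖a‖ • rotation (Circle.exp a.arg) d := by
  rw [rotation_apply, Circle.coe_exp, Complex.real_smul, ← mul_assoc,
    Complex.norm_mul_exp_arg_mul_I]

lemma traceCenter_smul (hC : IsConeLift D C) {a : ℂ} (ha : a ≠ 0) (v : CV n) :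
    traceCenter C (a • v) = ‖a‖ • traceCenter C v := by
  have hpre : rePart (a • v) ⁻¹' C = rotation (Circle.exp a.arg) ⁻¹' (rePart v ⁻¹' C) := by
    ext d
    rw [Set.mem_preimage, rePart_smul, mul_eq_norm_smul_rotation, map_smul,
      hC.smul_mem_iff (norm_pos_iff.2 ha)]
    rfl
  rw [traceCenter, hpre, rePart_smul, mul_eq_norm_smul_rotation, map_coneMoment, map_smul,
    traceCenter]

end Trace

section Action

variable {n : ℕ} {γ δ : Matrix.GeneralLinearGroup (Fin (n + 1)) ℝ} {D : Set (RP n)}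

lemma mulVec_ne_zero {R m : Type*} [CommRing R] [Fintype m] [DecidableEq m]
    (g : Matrix.GeneralLinearGroup m R) {v : m → R} (hv : v ≠ 0) : g.val.mulVec v ≠ 0 :=
  fun h => hv (Matrix.mulVec_injective_of_isUnit g.isUnit (by rw [h, Matrix.mulVec_zero]))

lemma cMat_mulVec_ne_zero (γ : Matrix.GeneralLinearGroup (Fin (n + 1)) ℝ) {v : CV n}
    (hv : v ≠ 0) : (cMat γ.val).mulVec v ≠ 0 :=
  mulVec_ne_zero (Matrix.GeneralLinearGroup.map (algebraMap ℝ ℂ) γ) hv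

lemma cMat_mulVec_cplx (M : Matrix (Fin (n + 1)) (Fin (n + 1)) ℝ) (u : RV n) :
    (cMat M).mulVec (cplx u) = cplx (M.mulVec u) := by
  ext i
  simp [cMat, cplx, Matrix.mulVec, dotProduct]

lemma actR_mk (γ : Matrix.GeneralLinearGroup (Fin (n + 1)) ℝ) {v : RV n} (hv : v ≠ 0) :
    actR γ (Projectivization.mk ℝ v hv) = Projectivization.mk ℝ _ (mulVec_ne_zero γ hv) := by
  obtain ⟨a, ha⟩ := Projectivization.exists_smul_eq_mk_rep ℝ v hv
  rw [actR, Projectivization.mk_eq_mk_iff']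
  exact ⟨a, by rw [← ha, Units.smul_def, Matrix.mulVec_smul]⟩

lemma actC_mk (γ : Matrix.GeneralLinearGroup (Fin (n + 1)) ℝ) {v : CV n} (hv : v ≠ 0) :
    actC γ (Projectivization.mk ℂ v hv) = Projectivization.mk ℂ _ (cMat_mulVec_ne_zero γ hv) := by
  obtain ⟨a, ha⟩ := Projectivization.exists_smul_eq_mk_rep ℂ v hv
  rw [actC, Projectivization.mk_eq_mk_iff']
  exact ⟨a, by rw [← ha, Units.smul_def, Matrix.mulVec_smul]⟩

lemma actR_inv_actR (γ : Matrix.GeneralLinearGroup (Fin (n + 1)) ℝ) (x : RP n) :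
    actR γ⁻¹ (actR γ x) = x := by
  induction x using Projectivization.ind with | _ v hv =>
  simp only [actR_mk, Matrix.mulVec_mulVec, Units.inv_mul, Matrix.one_mulVec]

lemma actC_actC_inv (γ : Matrix.GeneralLinearGroup (Fin (n + 1)) ℝ) (z : CP n) :
    actC γ (actC γ⁻¹ z) = z := by
  induction z using Projectivization.ind with | _ v hv =>
  simp only [actC_mk, Matrix.mulVec_mulVec]
  congr 1
  rw [cMat, cMat, ← Matrix.map_mul, Units.mul_inv,
    Matrix.map_one (algebraMap ℝ ℂ) (map_zero _) (map_one _), Matrix.one_mulVec]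

lemma mulVec_mem_vectorLift_iff (hγ : actR γ '' D = D) {v : RV n} :
    γ.val.mulVec v ∈ vectorLift D ↔ v ∈ vectorLift D := by
  by_cases hv : v = 0
  · rw [hv, Matrix.mulVec_zero]
  · rw [← mk_mem_iff_mem_vectorLift hv, ← mk_mem_iff_mem_vectorLift (mulVec_ne_zero γ hv),
      ← actR_mk γ hv]
    nth_rw 1 [← hγ]
    exact (Function.LeftInverse.injective (actR_inv_actR γ)).mem_set_image

lemma mapsTo_actC_eTube (hγ : actR γ '' D = D) : Set.MapsTo (actC γ) (eTube D) (eTube D) := by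
  intro z hz
  simp only [eTube, Set.mem_iUnion] at hz ⊢
  obtain ⟨v₀, v₁, hv₀, hv₁, hseg, c₀, c₁, hc, h, rfl⟩ := hz
  refine ⟨_, _, mulVec_ne_zero γ hv₀, mulVec_ne_zero γ hv₁, ?_, c₀, c₁, hc, ?_⟩
  · rintro x ⟨a, b, hab, hne, rfl⟩
    simp only [← Matrix.mulVec_smul, ← Matrix.mulVec_add] at hne ⊢
    have hne' : a • v₀ + b • v₁ ≠ 0 := fun h0 => hne (by rw [h0, Matrix.mulVec_zero])
    rw [mk_mem_iff_mem_vectorLift, mulVec_mem_vectorLift_iff hγ, ← mk_mem_iff_mem_vectorLift hne']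
    exact hseg ⟨a, b, hab, hne', rfl⟩
  · simp only [← cMat_mulVec_cplx, ← Matrix.mulVec_smul, ← Matrix.mulVec_add]
    exact ⟨cMat_mulVec_ne_zero γ h, actC_mk γ h⟩

lemma mapsTo_actC_traceDomain (hγ : actR γ '' D = D) :
    Set.MapsTo (actC γ) (traceDomain D) (traceDomain D) := by
  intro z hz
  induction z using Projectivization.ind with | _ v hv =>
  rw [mk_mem_traceDomain_iff] at hz
  rw [actC_mk, mk_mem_traceDomain_iff]
  simpa only [rePart_cMat_mulVec, mulVec_mem_vectorLift_iff hγ] using hz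

lemma image_actC_eq {S : Set (CP n)} (h : Set.MapsTo (actC γ) S S)
    (h' : Set.MapsTo (actC γ⁻¹) S S) : actC γ '' S = S :=
  h.image_subset.antisymm fun z hz => ⟨actC γ⁻¹ z, h' hz, actC_actC_inv γ z⟩

lemma exists_eq_smul_of_actR_eq (h : (actR γ : RP n → RP n) = actR δ) :
    ∃ a : ℝ, γ.val = a • δ.val := by
  have hpar (v : RV n) : ¬ LinearIndependent ℝ ![v, (δ⁻¹.val * γ.val).mulVec v] := by
    by_cases hv : v = 0
    · simp [hv, linearIndependent_fin2]
    · have hmk := congrFun h (Projectivization.mk ℝ v hv)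
      rw [actR_mk, actR_mk, Projectivization.mk_eq_mk_iff'] at hmk
      obtain ⟨a, ha⟩ := hmk
      rw [LinearIndependent.pair_iff' hv, ← Matrix.mulVec_mulVec, ← ha, Matrix.mulVec_smul,
        Matrix.mulVec_mulVec, Units.inv_mul, Matrix.one_mulVec]
      exact fun hne => hne a rfl
  obtain ⟨a, ha⟩ :=
    LinearMap.exists_eq_smul_id_of_forall_notLinearIndependent
      (f := Matrix.toLin' (δ⁻¹.val * γ.val)) hpar
  have hscalar : δ⁻¹.val * γ.val = a • 1 := Matrix.toLin'.injective (by
    rw [ha, map_smul, Matrix.toLin'_one]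
    rfl)
  refine ⟨a, ?_⟩
  calc γ.val = δ.val * (δ⁻¹.val * γ.val) := by rw [← mul_assoc, Units.mul_inv, one_mul]
    _ = a • δ.val := by rw [hscalar, Matrix.mul_smul, mul_one]

lemma actC_eq_of_actR_eq (h : (actR γ : RP n → RP n) = actR δ) :
    (actC γ : CP n → CP n) = actC δ := by
  obtain ⟨a, ha⟩ := exists_eq_smul_of_actR_eq h
  funext z
  induction z using Projectivization.ind with | _ v hv =>
  rw [actC_mk, actC_mk, Projectivization.mk_eq_mk_iff']
  refine ⟨a, ?_⟩
  rw [ha, cMat, cMat, ← Matrix.smul_mulVec]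
  congr 1
  ext i j
  simp

end Action

section TraceProjection

variable {n : ℕ} {D : Set (RP n)} {C : Set (RV n)}

namespace IsConeLift

/-- The map from complex points to points of `D` induced by `traceCenter`. -/
def traceProj (hC : IsConeLift D C) (z : traceDomain D) : RP n :=
  Projectivization.mk ℝ (traceCenter C z.1.rep)
    (ne_zero_of_mem_vectorLift (hC.subset_vectorLift (traceCenter_mem hC z.2)))

lemma traceProj_mem (hC : IsConeLift D C) (z : traceDomain D) : hC.traceProj z ∈ D :=
  (mk_mem_iff_mem_vectorLift _).2 (hC.subset_vectorLift (traceCenter_mem hC z.2))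

lemma traceCenter_ne_zero (hC : IsConeLift D C) {v : CV n} {hv : v ≠ 0}
    (hz : Projectivization.mk ℂ v hv ∈ traceDomain D) : traceCenter C v ≠ 0 :=
  ne_zero_of_mem_vectorLift
    (hC.subset_vectorLift (traceCenter_mem hC ((mk_mem_traceDomain_iff hv).1 hz)))

lemma traceProj_mk (hC : IsConeLift D C) {v : CV n} {hv : v ≠ 0}
    (hz : Projectivization.mk ℂ v hv ∈ traceDomain D) :
    hC.traceProj ⟨_, hz⟩ = Projectivization.mk ℝ (traceCenter C v) (hC.traceCenter_ne_zero hz) := by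
  obtain ⟨a, ha⟩ := Projectivization.exists_smul_eq_mk_rep ℂ v hv
  refine (Projectivization.mk_eq_mk_iff' ℝ _ _ _ _).2 ⟨‖(a : ℂ)‖, ?_⟩
  rw [← traceCenter_smul hC a.ne_zero, ← Units.smul_def, ha]

lemma continuous_traceProj (hDo : IsOpen D) (hC : IsConeLift D C) : Continuous hC.traceProj := by
  refine (isQuotientMap_projectivization_mk'.restrictPreimage_isOpen
    (isOpen_traceDomain hDo)).continuous_iff.2 ?_
  have hcenter : Continuous fun v : Projectivization.mk' ℂ ⁻¹' traceDomain D =>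
      traceCenter C v.1.1 := continuous_iff_continuousAt.2 fun v =>
    ContinuousAt.comp (f := fun v : Projectivization.mk' ℂ ⁻¹' traceDomain D => v.1.1)
      (continuousAt_traceCenter hC ((mk_mem_traceDomain_iff v.1.2).1 v.2)) (by fun_prop)
  convert! isQuotientMap_projectivization_mk'.continuous.comp
    (hcenter.subtype_mk fun v => hC.traceCenter_ne_zero v.2) using 1
  funext v
  exact hC.traceProj_mk v.2

lemma traceProj_actC (hC : IsConeLift D C) {γ : Matrix.GeneralLinearGroup (Fin (n + 1)) ℝ}
    (hγ : actR γ '' D = D) (z : traceDomain D) :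
    hC.traceProj ⟨actC γ z, mapsTo_actC_traceDomain hγ z.2⟩ = actR γ (hC.traceProj z) := by
  obtain ⟨z, hz⟩ := z
  induction z using Projectivization.ind with | _ v hv =>
  have hC' : IsConeLift D (γ.val.mulVec ⁻¹' C) :=
    hC.preimage (Matrix.toLin' γ.val).toContinuousLinearMap
      (Set.ext fun _ => mulVec_mem_vectorLift_iff hγ)
  have hcenter : traceCenter (γ.val.mulVec ⁻¹' C) v = traceCenter C v ∨
      traceCenter (γ.val.mulVec ⁻¹' C) v = -traceCenter C v :=
    (hC.eq_or_eq_neg hC').imp (fun h => by rw [h]) fun h => by rw [h, traceCenter_neg]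
  have hz' : Projectivization.mk ℂ _ (cMat_mulVec_ne_zero γ hv) ∈ traceDomain D :=
    actC_mk γ hv ▸ mapsTo_actC_traceDomain hγ hz
  simp only [actC_mk, hC.traceProj_mk hz, hC.traceProj_mk hz', actR_mk]
  rw [Projectivization.mk_eq_mk_iff', traceCenter_cMat_mulVec]
  rcases hcenter with h | h
  · exact ⟨1, by rw [h, one_smul]⟩
  · exact ⟨-1, by rw [h, neg_one_smul, Matrix.mulVec_neg]⟩

end IsConeLift

theorem gamma_acts_freely_properly_discontinuously_on_eTube_general
    (n : ℕ) (Ω : Set (RP n)) (hΩo : IsOpen Ω) (hΩ : convexR Ω)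
    (Γ : Subgroup (Matrix.GeneralLinearGroup (Fin (n + 1)) ℝ))
    (hpres : ∀ γ ∈ Γ, actR γ '' Ω = Ω)
    (hfree : ∀ γ ∈ Γ, (∃ x ∈ Ω, actR γ x = x) →
      ∃ r : ℝ, (γ : Matrix (Fin (n + 1)) (Fin (n + 1)) ℝ) =
        r • (1 : Matrix (Fin (n + 1)) (Fin (n + 1)) ℝ))
    (hpd : ∀ K : Set (RP n), K ⊆ Ω → IsCompact K →
      Set.Finite ((fun γ : Matrix.GeneralLinearGroup (Fin (n + 1)) ℝ =>
          (actR γ : RP n → RP n)) ''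
        {γ | γ ∈ Γ ∧ (actR γ '' K ∩ K).Nonempty})) :
    (∀ γ ∈ Γ, actC γ '' eTube Ω = eTube Ω ∧ actC γ '' traceDomain Ω = traceDomain Ω) ∧
    (∀ γ ∈ Γ, (∃ z ∈ traceDomain Ω, actC γ z = z) →
      ∃ r : ℝ, (γ : Matrix (Fin (n + 1)) (Fin (n + 1)) ℝ) =
        r • (1 : Matrix (Fin (n + 1)) (Fin (n + 1)) ℝ)) ∧
    (∀ K : Set (CP n), K ⊆ traceDomain Ω → IsCompact K →
      Set.Finite ((fun γ : Matrix.GeneralLinearGroup (Fin (n + 1)) ℝ =>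
          (actC γ : CP n → CP n)) ''
        {γ | γ ∈ Γ ∧ (actC γ '' K ∩ K).Nonempty})) := by
  obtain ⟨C, hC⟩ := exists_isConeLift hΩo hΩ
  have hinv {γ} (hγ : γ ∈ Γ) : actR γ⁻¹ '' Ω = Ω := hpres _ (Γ.inv_mem hγ)
  refine ⟨fun γ hγ => ⟨image_actC_eq (mapsTo_actC_eTube (hpres γ hγ)) (mapsTo_actC_eTube (hinv hγ)),
    image_actC_eq (mapsTo_actC_traceDomain (hpres γ hγ)) (mapsTo_actC_traceDomain (hinv hγ))⟩,
    ?_, fun K hK hKc => ?_⟩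
  · rintro γ hγ ⟨z, hz, hfix⟩
    have := hC.traceProj_actC (hpres γ hγ) ⟨z, hz⟩
    simp only [hfix] at this
    exact hfree γ hγ ⟨_, hC.traceProj_mem _, this.symm⟩
  · let K' : Set (RP n) := hC.traceProj '' (Subtype.val ⁻¹' K)
    have hK' : IsCompact K' :=
      (Topology.IsInducing.subtypeVal.isCompact_preimage' hKc (by simpa using hK)).image
        (hC.continuous_traceProj hΩo)
    have hK'Ω : K' ⊆ Ω := by
      rintro _ ⟨z, -, rfl⟩
      exact hC.traceProj_mem z
    obtain ⟨toActC, htoActC⟩ :=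
      (Function.factorsThrough_iff (f := actR) (actC (n := n))).1 fun _ _ => actC_eq_of_actR_eq
    rw [show (fun γ => (actC γ : CP n → CP n)) = _ from htoActC, Set.image_comp]
    refine ((hpd K' hK'Ω hK').subset (Set.image_mono ?_)).image _
    rintro γ ⟨hγ, _, ⟨z, hz, rfl⟩, hγz⟩
    refine ⟨hγ, _, ⟨_, ⟨⟨z, hK hz⟩, hz, rfl⟩, rfl⟩, ?_⟩
    rw [← hC.traceProj_actC (hpres γ hγ)]
    exact ⟨_, hγz, rfl⟩

end TraceProjection

/-- If `Γ ⊆ GL(n+1,ℝ)` acts projectively on an open properly convex set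
`Ω ⊆ ℝℙⁿ` preserving it, freely (only scalar matrices have fixed points in `Ω`) and
properly discontinuously (the set of classes modulo scalars — equivalently, of induced
projective maps — of elements moving a compact `K ⊆ Ω` into itself is finite), then the
induced action on `ℂℙⁿ` preserves the elliptic tube `Ω^e` and is free and properly
discontinuous on it in the same sense. -/
theorem gamma_acts_freely_properly_discontinuously_on_eTube
    (n : ℕ) (Ω : Set (RP n)) (hΩo : IsOpen Ω) (hpc : properlyConvexR Ω)
    (Γ : Subgroup (Matrix.GeneralLinearGroup (Fin (n + 1)) ℝ))
    (hpres : ∀ γ ∈ Γ, actR γ '' Ω = Ω)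
    (hfree : ∀ γ ∈ Γ, (∃ x ∈ Ω, actR γ x = x) →
      ∃ r : ℝ, (γ : Matrix (Fin (n + 1)) (Fin (n + 1)) ℝ) =
        r • (1 : Matrix (Fin (n + 1)) (Fin (n + 1)) ℝ))
    (hpd : ∀ K : Set (RP n), K ⊆ Ω → IsCompact K →
      Set.Finite ((fun γ : Matrix.GeneralLinearGroup (Fin (n + 1)) ℝ =>
          (actR γ : RP n → RP n)) ''
        {γ | γ ∈ Γ ∧ (actR γ '' K ∩ K).Nonempty})) :
    (∀ γ ∈ Γ, actC γ '' eTube Ω = eTube Ω) ∧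
    (∀ γ ∈ Γ, (∃ z ∈ eTube Ω, actC γ z = z) →
      ∃ r : ℝ, (γ : Matrix (Fin (n + 1)) (Fin (n + 1)) ℝ) =
        r • (1 : Matrix (Fin (n + 1)) (Fin (n + 1)) ℝ)) ∧
    (∀ K : Set (CP n), K ⊆ eTube Ω → IsCompact K →
      Set.Finite ((fun γ : Matrix.GeneralLinearGroup (Fin (n + 1)) ℝ =>
          (actC γ : CP n → CP n)) ''
        {γ | γ ∈ Γ ∧ (actC γ '' K ∩ K).Nonempty})) := by
  obtain ⟨hmaps, hfixed, hfinite⟩ :=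
    gamma_acts_freely_properly_discontinuously_on_eTube_general n Ω hΩo hpc.1 Γ hpres hfree hpd
  have hsub := eTube_subset_traceDomain Ω
  exact ⟨fun γ hγ => (hmaps γ hγ).1, fun γ hγ ⟨z, hz, hfix⟩ => hfixed γ hγ ⟨z, hsub hz, hfix⟩,
    fun K hK => hfinite K (hK.trans hsub)⟩
end
end
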